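/- arXiv:0704.2500 — 8 statements merged into one kernel-verified Lean document; each statement's English description precedes it below -/
import Mathlib

section
/- Under the model-selection aggregation procedure described in the context, if the finite set of probe functions Ψ is (γ,p)-good with respect to G, then the selected estimator f̂ = f_î satisfies the oracle inequality E‖f̂ − f‖_p ≤ (2·max_{ψ∈Ψ*} ‖ψ‖_q + 1)·min_{i∈I_N} ‖f − f_i‖_p + 2κε·max_{ψ∈Ψ*} ‖ψ‖_2 + γ + (‖f‖_p + max_{i∈I_N} ‖f_i‖_p)·δ. -/
open MeasureTheory
open scoped ENNReal

/-- Lebesgue measure restricted to the unit cube `[0,1]^d`. -/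
noncomputable def cubeMeasure (d : ℕ) : Measure (Fin d → ℝ) :=
  volume.restrict (Set.Icc 0 1)

/-- The real-valued `L^r` norm on the unit cube. -/
noncomputable def Lnorm {d : ℕ} (r : ℝ≥0∞) (g : (Fin d → ℝ) → ℝ) : ℝ :=
  (eLpNorm g r (cubeMeasure d)).toReal

theorem aux_nonneg {d : ℕ} (r : ℝ≥0∞) (g : (Fin d → ℝ) → ℝ) : 0 ≤ Lnorm r g :=
  ENNReal.toReal_nonneg

theorem aux_holder {d : ℕ} {p q : ℝ≥0∞} (hpq : 1 / p + 1 / q = 1)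
    {u g : (Fin d → ℝ) → ℝ} (hu : MemLp u q (cubeMeasure d)) (hg : MemLp g p (cubeMeasure d)) :
    Integrable (fun t => u t * g t) (cubeMeasure d) ∧
      |∫ t, u t * g t ∂(cubeMeasure d)| ≤ Lnorm q u * Lnorm p g := by
  have : ENNReal.HolderTriple q p 1 := ⟨by
    rw [add_comm]; simpa using hpq⟩
  have hm : MemLp (u • g) 1 (cubeMeasure d) := hg.smul hu
  have hi : Integrable (fun t => u t * g t) (cubeMeasure d) := memLp_one_iff_integrable.1 hm
  refine ⟨hi, ?_⟩
  have h1 : eLpNorm (u • g) 1 (cubeMeasure d)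
      ≤ eLpNorm u q (cubeMeasure d) * eLpNorm g p (cubeMeasure d) :=
    eLpNorm_smul_le_mul_eLpNorm hg.1 hu.1
  have h2 := ENNReal.toReal_mono (ENNReal.mul_ne_top hu.2.ne hg.2.ne) h1
  rw [ENNReal.toReal_mul] at h2
  refine le_trans ?_ h2
  rw [← Real.norm_eq_abs]
  refine (norm_integral_le_integral_norm _).trans ?_
  rw [integral_norm_eq_lintegral_enorm hi.1, eLpNorm_one_eq_lintegral_enorm]
  exact le_rfl

theorem aux_sub {d : ℕ} {p : ℝ≥0∞} (hp : 1 ≤ p)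
    {u g : (Fin d → ℝ) → ℝ} (hu : MemLp u p (cubeMeasure d)) (hg : MemLp g p (cubeMeasure d)) :
    Lnorm p (fun t => u t - g t) ≤ Lnorm p u + Lnorm p g := by
  have h := ENNReal.toReal_mono (ENNReal.add_ne_top.2 ⟨hu.2.ne, hg.2.ne⟩)
    (eLpNorm_sub_le hu.1 hg.1 hp)
  rw [ENNReal.toReal_add hu.2.ne hg.2.ne] at h
  exact h

theorem aux_comm {d : ℕ} (p : ℝ≥0∞) (u g : (Fin d → ℝ) → ℝ) :
    Lnorm p (fun t => u t - g t) = Lnorm p (fun t => g t - u t) := by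
  unfold Lnorm
  exact congrArg ENNReal.toReal (eLpNorm_sub_comm u g p _)

theorem aux_pos {d : ℕ} {q : ℝ≥0∞} {u : (Fin d → ℝ) → ℝ} (hm : Measurable u)
    (h2 : eLpNorm u 2 (cubeMeasure d) ≠ ⊤) (h : 0 < Lnorm q u) : 0 < Lnorm 2 u := by
  refine ENNReal.toReal_pos ?_ h2
  intro h0
  rw [eLpNorm_eq_zero_iff hm.aestronglyMeasurable (by norm_num)] at h0
  have : Lnorm q u = 0 := by
    unfold Lnorm
    rw [eLpNorm_congr_ae h0]; simp
  exact h.ne' this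

/-- Theorem 1 of the paper: the basic oracle inequality for the
model-selection aggregation procedure with a `(γ,p)`-good set of probe functions. -/
theorem stmt_0
    {d N : ℕ} (hd : 1 ≤ d) (hN : 2 ≤ N)
    (p q : ℝ≥0∞) (hp : 1 ≤ p) (hpq : 1 / p + 1 / q = 1)
    (γ : ℝ) (hγ : 0 ≤ γ)
    (f : (Fin d → ℝ) → ℝ) (F : Fin N → (Fin d → ℝ) → ℝ)
    (hfm : Measurable f) (hFm : ∀ i, Measurable (F i))
    (hf : eLpNorm f p (cubeMeasure d) ≠ ⊤)
    (hF : ∀ i, eLpNorm (F i) p (cubeMeasure d) ≠ ⊤)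
    (hFdist : ∀ i j, i ≠ j → F i ≠ F j)
    -- the finite set of probe functions `Ψ`, indexed by `K`
    {K : Type} [Fintype K] [Nonempty K]
    (ψ : K → (Fin d → ℝ) → ℝ) (hψm : ∀ k, Measurable (ψ k))
    (hψq : ∀ k, eLpNorm (ψ k) q (cubeMeasure d) ≠ ⊤)
    (hψ2 : ∀ k, eLpNorm (ψ k) 2 (cubeMeasure d) ≠ ⊤)
    (hψpos : ∀ k, 0 < Lnorm q (ψ k))
    -- `Ψ` is `(γ,p)`-good w.r.t. `G`: designated representers for pairwise differences
    (rep : Fin N → Fin N → K)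
    (hgood : ∀ i j, i ≠ j →
      |(∫ t, ψ (rep i j) t * (F i t - F j t) ∂(cubeMeasure d)) -
        Lnorm p (fun t => F i t - F j t)| ≤ γ)
    -- the aggregation procedure
    {Ω : Type} [MeasurableSpace Ω] (P : Measure Ω) [IsProbabilityMeasure P]
    (ε δ : ℝ) (hε : 0 < ε) (hδ0 : 0 < δ) (hδ1 : δ < 1)
    (Z : K → Ω → ℝ) (hZm : ∀ k, Measurable (Z k))
    (κ : ℝ) (hκpos : 0 < κ)
    (hκ : (P {ω | κ ≤ ⨆ k, |Z k ω| / Lnorm 2 (ψ k)}).toReal ≤ δ)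
    (Δ : Fin N → K → Ω → ℝ)
    (hΔ : ∀ i k ω, Δ i k ω =
      (∫ t, ψ k t * (f t - F i t) ∂(cubeMeasure d)) + ε * Z k ω)
    (Mhat : Fin N → Ω → ℝ)
    (hM : ∀ i ω, Mhat i ω =
      ⨆ k, (|Δ i k ω| - ε * κ * Lnorm 2 (ψ k)) / Lnorm q (ψ k))
    (ihat : Ω → Fin N) (hihatm : Measurable ihat)
    (hmin : ∀ ω i, Mhat (ihat ω) ω ≤ Mhat i ω)
    -- the oracle index
    (istar : Fin N)
    (histar : ∀ i, Lnorm p (fun t => f t - F istar t) ≤ Lnorm p (fun t => f t - F i t)) :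
    ∫ ω, Lnorm p (fun t => F (ihat ω) t - f t) ∂P ≤
      (2 * (⨆ j : {j : Fin N // j ≠ istar}, Lnorm q (ψ (rep istar j.1))) + 1) *
          (⨅ i, Lnorm p (fun t => f t - F i t))
        + 2 * κ * ε * (⨆ j : {j : Fin N // j ≠ istar}, Lnorm 2 (ψ (rep istar j.1)))
        + γ + (Lnorm p f + ⨆ i, Lnorm p (F i)) * δ := by
  have mf : MemLp f p (cubeMeasure d) := ⟨hfm.aestronglyMeasurable, lt_top_iff_ne_top.2 hf⟩
  have mF : ∀ i, MemLp (F i) p (cubeMeasure d) :=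
    fun i => ⟨(hFm i).aestronglyMeasurable, lt_top_iff_ne_top.2 (hF i)⟩
  have mψ : ∀ k, MemLp (ψ k) q (cubeMeasure d) :=
    fun k => ⟨(hψm k).aestronglyMeasurable, lt_top_iff_ne_top.2 (hψq k)⟩
  have md : ∀ i, MemLp (fun t => f t - F i t) p (cubeMeasure d) := fun i => mf.sub (mF i)
  have hH := fun k i => aux_holder hpq (mψ k) (md i)
  have pos2 : ∀ k, 0 < Lnorm 2 (ψ k) := fun k => aux_pos (hψm k) (hψ2 k) (hψpos k)
  have : Nonempty (Fin N) := ⟨istar⟩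
  have hmineq : (⨅ i, Lnorm p (fun t => f t - F i t)) = Lnorm p (fun t => f t - F istar t) :=
    le_antisymm (ciInf_le (Set.finite_range _).bddBelow istar) (le_ciInf histar)
  rw [hmineq]
  set m := Lnorm p (fun t => f t - F istar t) with hm
  have hm0 : 0 ≤ m := aux_nonneg _ _
  set Q := ⨆ j : {j : Fin N // j ≠ istar}, Lnorm q (ψ (rep istar j.1)) with hQ
  set S := ⨆ j : {j : Fin N // j ≠ istar}, Lnorm 2 (ψ (rep istar j.1)) with hS
  have hQ0 : 0 ≤ Q := Real.iSup_nonneg fun _ => aux_nonneg _ _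
  have hS0 : 0 ≤ S := Real.iSup_nonneg fun _ => aux_nonneg _ _
  have hQle : ∀ j, j ≠ istar → Lnorm q (ψ (rep istar j)) ≤ Q := fun j hj =>
    le_ciSup (f := fun j : {j : Fin N // j ≠ istar} => Lnorm q (ψ (rep istar j.1)))
      (Set.finite_range _).bddAbove ⟨j, hj⟩
  have hSle : ∀ j, j ≠ istar → Lnorm 2 (ψ (rep istar j)) ≤ S := fun j hj =>
    le_ciSup (f := fun j : {j : Fin N // j ≠ istar} => Lnorm 2 (ψ (rep istar j.1)))
      (Set.finite_range _).bddAbove ⟨j, hj⟩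
  set B := Lnorm p f + ⨆ i, Lnorm p (F i) with hB
  have hB0 : 0 ≤ B := add_nonneg (aux_nonneg _ _) (Real.iSup_nonneg fun _ => aux_nonneg _ _)
  set R := (2 * Q + 1) * m + 2 * κ * ε * S + γ with hR
  have hR0 : 0 ≤ R := by positivity
  set A := {ω | κ ≤ ⨆ k, |Z k ω| / Lnorm 2 (ψ k)} with hA
  have hAm : MeasurableSet A := by
    apply measurableSet_le measurable_const
    apply Measurable.iSup
    intro k
    exact (continuous_abs.measurable.comp (hZm k)).div_const _
  have hbad : ∀ ω, Lnorm p (fun t => F (ihat ω) t - f t) ≤ B := by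
    intro ω
    have h1 := aux_sub hp (mF (ihat ω)) mf
    have h2 : Lnorm p (F (ihat ω)) ≤ ⨆ i, Lnorm p (F i) :=
      le_ciSup (f := fun i => Lnorm p (F i)) (Set.finite_range _).bddAbove (ihat ω)
    linarith
  have hgoodω : ∀ ω, ω ∉ A → Lnorm p (fun t => F (ihat ω) t - f t) ≤ R := by
    intro ω hω
    have hω' : (⨆ k, |Z k ω| / Lnorm 2 (ψ k)) < κ := not_le.1 hω
    have hZ : ∀ k, |Z k ω| ≤ κ * Lnorm 2 (ψ k) := by
      intro k
      have h1 : |Z k ω| / Lnorm 2 (ψ k) ≤ ⨆ k, |Z k ω| / Lnorm 2 (ψ k) :=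
        le_ciSup (f := fun k => |Z k ω| / Lnorm 2 (ψ k)) (Set.finite_range _).bddAbove k
      exact (div_le_iff₀ (pos2 k)).1 (h1.trans hω'.le)
    have hεZ : ∀ k, |ε * Z k ω| ≤ ε * κ * Lnorm 2 (ψ k) := by
      intro k
      rw [abs_mul, abs_of_pos hε, mul_assoc]
      exact mul_le_mul_of_nonneg_left (hZ k) hε.le
    have hMs : Mhat istar ω ≤ m := by
      rw [hM]
      refine ciSup_le fun k => ?_
      rw [div_le_iff₀ (hψpos k), hΔ]
      have h1 := abs_add_le (∫ t, ψ k t * (f t - F istar t) ∂(cubeMeasure d)) (ε * Z k ω)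
      have h2 := (hH k istar).2
      have h3 := hεZ k
      rw [mul_comm] at h2
      linarith
    rw [aux_comm]
    by_cases hi : ihat ω = istar
    · rw [hi, ← hm]
      have : 0 ≤ 2 * Q * m + 2 * κ * ε * S + γ := by positivity
      rw [hR]; linarith
    · have hMi := (hmin ω istar).trans hMs
      generalize ihat ω = i at hi hMi
      have hg := (abs_le.1 (hgood istar i (Ne.symm hi))).1
      have hQi := hQle i hi
      have hSi := hSle i hi
      generalize rep istar i = k at hg hQi hSi
      have h1 : (|Δ i k ω| - ε * κ * Lnorm 2 (ψ k)) / Lnorm q (ψ k) ≤ m := by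
        refine le_trans ?_ hMi
        rw [hM]
        exact le_ciSup (f := fun k => (|Δ i k ω| - ε * κ * Lnorm 2 (ψ k)) / Lnorm q (ψ k))
          (Set.finite_range _).bddAbove k
      rw [div_le_iff₀ (hψpos k), hΔ] at h1
      have hint : (∫ t, ψ k t * (F istar t - F i t) ∂(cubeMeasure d))
          = (∫ t, ψ k t * (f t - F i t) ∂(cubeMeasure d))
            - ∫ t, ψ k t * (f t - F istar t) ∂(cubeMeasure d) := by
        rw [← integral_sub (hH k i).1 (hH k istar).1]
        congr 1; ext t; ring
      have h2 := (abs_le.1 (hH k istar).2).1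
      have h3 := (abs_le.1 (hεZ k)).1
      have h4 := le_abs_self ((∫ t, ψ k t * (f t - F i t) ∂(cubeMeasure d)) + ε * Z k ω)
      have h5 : Lnorm p (fun t => f t - F i t) ≤ m + Lnorm p (fun t => F istar t - F i t) := by
        have h := ENNReal.toReal_mono
          (ENNReal.add_ne_top.2 ⟨(md istar).2.ne, ((mF istar).sub (mF i)).2.ne⟩)
          (eLpNorm_add_le (md istar).1 ((mF istar).sub (mF i)).1 hp)
        rw [ENNReal.toReal_add (md istar).2.ne ((mF istar).sub (mF i)).2.ne] at h
        have e : ((fun t => f t - F istar t) + (F istar - F i)) = fun t => f t - F i t := by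
          ext t; simp
        rw [e] at h
        exact h
      have h6 : Lnorm q (ψ k) * m ≤ Q * m := mul_le_mul_of_nonneg_right hQi hm0
      have h7 : ε * κ * Lnorm 2 (ψ k) ≤ ε * κ * S :=
        mul_le_mul_of_nonneg_left hSi (by positivity)
      rw [hR]
      rw [← hm] at h2
      linarith
  calc ∫ ω, Lnorm p (fun t => F (ihat ω) t - f t) ∂P
      ≤ ∫ ω, (R + A.indicator (fun _ => B) ω) ∂P := by
        apply integral_mono_of_nonneg
        · exact Filter.Eventually.of_forall fun ω => aux_nonneg _ _
        · exact (integrable_const _).add ((integrable_const _).indicator hAm)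
        · refine Filter.Eventually.of_forall fun ω => ?_
          by_cases hω : ω ∈ A
          · simp only [Set.indicator_of_mem hω]
            linarith [hbad ω]
          · simp only [Set.indicator_of_notMem hω]
            linarith [hgoodω ω hω]
    _ = R + P.real A * B := by
        rw [integral_add (integrable_const _) ((integrable_const _).indicator hAm),
          integral_indicator_const _ hAm]
        simp
    _ ≤ R + B * δ := by
        rw [mul_comm]
        have := mul_le_mul_of_nonneg_left hκ hB0
        simp only [Measure.real]
        linarith
end

section
/- In the deterministic setting described in the context, if Ψ is (γ,p)-good with respect to G and î ∈ I_N minimizes M̂_i := max_{ψ∈Ψ} (|Δ_i(ψ)| − εκ‖ψ‖_2)/‖ψ‖_q over i ∈ I_N, then ‖f_{i*} − f_î‖_p ≤ 2·(max_{ψ∈Ψ*} ‖ψ‖_q)·‖f − f_{i*}‖_p + 2εκ·max_{ψ∈Ψ*} ‖ψ‖_2 + γ. -/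
open MeasureTheory
open scoped ENNReal

lemma holder_aux {d : ℕ} {p q : ℝ≥0∞} (hpq : 1 / p + 1 / q = 1)
    {a g : (Fin d → ℝ) → ℝ} (ha : MemLp a q (cubeMeasure d)) (hg : MemLp g p (cubeMeasure d)) :
    Integrable (fun t => a t * g t) (cubeMeasure d) ∧
      |∫ t, a t * g t ∂(cubeMeasure d)| ≤ Lnorm q a * Lnorm p g := by
  haveI : ENNReal.HolderTriple q p 1 := ⟨by
    rw [inv_one, ← hpq, one_div, one_div, add_comm]⟩
  have hint : Integrable (fun t => a t * g t) (cubeMeasure d) := by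
    have h : MemLp (a • g) 1 (cubeMeasure d) := hg.smul ha
    exact memLp_one_iff_integrable.1 h
  refine ⟨hint, ?_⟩
  have h1 : eLpNorm (a • g) 1 (cubeMeasure d)
      ≤ eLpNorm a q (cubeMeasure d) * eLpNorm g p (cubeMeasure d) :=
    eLpNorm_smul_le_mul_eLpNorm hg.1 ha.1
  have h2 : ‖∫ t, a t * g t ∂(cubeMeasure d)‖ ≤ ∫ t, ‖a t * g t‖ ∂(cubeMeasure d) :=
    norm_integral_le_integral_norm _
  rw [integral_norm_eq_lintegral_enorm hint.1, ← eLpNorm_one_eq_lintegral_enorm] at h2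
  rw [← Real.norm_eq_abs]
  refine h2.trans ?_
  unfold Lnorm
  rw [← ENNReal.toReal_mul]
  exact ENNReal.toReal_mono (ENNReal.mul_ne_top ha.2.ne hg.2.ne) h1

/-- deterministic bound on the distance between the selected and
the oracle estimator for a `(γ,p)`-good probe set. -/
theorem stmt_2
    {d N : ℕ} (hd : 1 ≤ d) (hN : 2 ≤ N)
    (p q : ℝ≥0∞) (hp : 1 ≤ p) (hpq : 1 / p + 1 / q = 1)
    (γ : ℝ) (hγ : 0 ≤ γ)
    (f : (Fin d → ℝ) → ℝ) (F : Fin N → (Fin d → ℝ) → ℝ)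
    (hfm : Measurable f) (hFm : ∀ i, Measurable (F i))
    (hf : eLpNorm f p (cubeMeasure d) ≠ ⊤)
    (hF : ∀ i, eLpNorm (F i) p (cubeMeasure d) ≠ ⊤)
    (hFdist : ∀ i j, i ≠ j → F i ≠ F j)
    {K : Type} [Fintype K] [Nonempty K]
    (ψ : K → (Fin d → ℝ) → ℝ) (hψm : ∀ k, Measurable (ψ k))
    (hψq : ∀ k, eLpNorm (ψ k) q (cubeMeasure d) ≠ ⊤)
    (hψ2 : ∀ k, eLpNorm (ψ k) 2 (cubeMeasure d) ≠ ⊤)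
    (hψpos : ∀ k, 0 < Lnorm q (ψ k))
    (rep : Fin N → Fin N → K)
    (hgood : ∀ i j, i ≠ j →
      |(∫ t, ψ (rep i j) t * (F i t - F j t) ∂(cubeMeasure d)) -
        Lnorm p (fun t => F i t - F j t)| ≤ γ)
    (ε κ : ℝ) (hε : 0 < ε) (hκpos : 0 < κ)
    (z : K → ℝ) (hz : ∀ k, |z k| ≤ κ * Lnorm 2 (ψ k))
    (Δ : Fin N → K → ℝ)
    (hΔ : ∀ i k, Δ i k =
      (∫ t, ψ k t * (f t - F i t) ∂(cubeMeasure d)) + ε * z k)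
    (Mhat : Fin N → ℝ)
    (hM : ∀ i, Mhat i = ⨆ k, (|Δ i k| - ε * κ * Lnorm 2 (ψ k)) / Lnorm q (ψ k))
    (ihat : Fin N) (hmin : ∀ i, Mhat ihat ≤ Mhat i)
    (istar : Fin N)
    (histar : ∀ i, Lnorm p (fun t => f t - F istar t) ≤ Lnorm p (fun t => f t - F i t)) :
    Lnorm p (fun t => F istar t - F ihat t) ≤
      2 * (⨆ j : {j : Fin N // j ≠ istar}, Lnorm q (ψ (rep istar j.1))) *
          Lnorm p (fun t => f t - F istar t)
        + 2 * ε * κ * (⨆ j : {j : Fin N // j ≠ istar}, Lnorm 2 (ψ (rep istar j.1)))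
        + γ := by
  have hψL : ∀ k, MemLp (ψ k) q (cubeMeasure d) := fun k =>
    ⟨(hψm k).aestronglyMeasurable, (hψq k).lt_top⟩
  have hfL : MemLp f p (cubeMeasure d) := ⟨hfm.aestronglyMeasurable, hf.lt_top⟩
  have hFL : ∀ i, MemLp (F i) p (cubeMeasure d) := fun i =>
    ⟨(hFm i).aestronglyMeasurable, (hF i).lt_top⟩
  have hH := fun k i => holder_aux (a := ψ k) (g := fun t => f t - F i t) hpq (hψL k)
    (hfL.sub (hFL i))
  set B := Lnorm p (fun t => f t - F istar t) with hB
  have hB0 : 0 ≤ B := ENNReal.toReal_nonneg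
  have hstar : ∀ k, |Δ istar k| ≤ Lnorm q (ψ k) * B + ε * κ * Lnorm 2 (ψ k) := by
    intro k
    rw [hΔ]
    refine (abs_add_le _ _).trans (add_le_add (hH k istar).2 ?_)
    rw [abs_mul, abs_of_pos hε, mul_assoc]
    exact mul_le_mul_of_nonneg_left (hz k) hε.le
  have hMstar : Mhat istar ≤ B := by
    rw [hM]
    refine ciSup_le fun k => ?_
    rw [div_le_iff₀ (hψpos k)]
    linarith [hstar k]
  have hhat : ∀ k, |Δ ihat k| ≤ Lnorm q (ψ k) * B + ε * κ * Lnorm 2 (ψ k) := by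
    intro k
    have h1 : (|Δ ihat k| - ε * κ * Lnorm 2 (ψ k)) / Lnorm q (ψ k) ≤ Mhat ihat := by
      rw [hM]
      exact le_ciSup (f := fun k => (|Δ ihat k| - ε * κ * Lnorm 2 (ψ k)) / Lnorm q (ψ k))
        (Set.finite_range _).bddAbove k
    have h2 := h1.trans ((hmin istar).trans hMstar)
    rw [div_le_iff₀ (hψpos k)] at h2
    linarith
  by_cases hne : ihat = istar
  · subst hne
    have h0 : Lnorm p (fun t => F ihat t - F ihat t) = 0 := by
      simp [Lnorm]
    rw [h0]
    have hq0 : 0 ≤ ⨆ j : {j : Fin N // j ≠ ihat}, Lnorm q (ψ (rep ihat j.1)) :=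
      Real.iSup_nonneg fun j => ENNReal.toReal_nonneg
    have h20 : 0 ≤ ⨆ j : {j : Fin N // j ≠ ihat}, Lnorm 2 (ψ (rep ihat j.1)) :=
      Real.iSup_nonneg fun j => ENNReal.toReal_nonneg
    positivity
  · have hq1 := le_ciSup (f := fun j : {j : Fin N // j ≠ istar} => Lnorm q (ψ (rep istar j.1)))
      (Set.finite_range _).bddAbove ⟨ihat, hne⟩
    have h21 := le_ciSup (f := fun j : {j : Fin N // j ≠ istar} => Lnorm 2 (ψ (rep istar j.1)))
      (Set.finite_range _).bddAbove ⟨ihat, hne⟩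
    have hg := (abs_le.1 (hgood istar ihat (Ne.symm hne))).1
    dsimp only at hq1 h21
    set k := rep istar ihat
    have hsub : ∫ t, ψ k t * (F istar t - F ihat t) ∂(cubeMeasure d) = Δ ihat k - Δ istar k := by
      rw [hΔ, hΔ, add_sub_add_right_eq_sub, ← integral_sub (hH k ihat).1 (hH k istar).1]
      congr 1
      ext t
      ring
    have a1 := (le_abs_self _).trans (hhat k)
    have a2 := (neg_le_abs _).trans (hstar k)
    have m1 := mul_le_mul_of_nonneg_right hq1 hB0
    have m2 := mul_le_mul_of_nonneg_left h21 (mul_pos hε hκpos).le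
    linarith
end

section
/- Let p ∈ [1,∞) and suppose the probe set is Ψ̃ := {ψ_g : g ∈ G} with ψ_g := |g|^{p−1}·sign(g)/‖g‖_p^{p−1} (so that ‖ψ_g‖_q = 1 and ∫ψ_g g = ‖g‖_p for every g ∈ G). Run the aggregation procedure of the context with δ = ε and κ = √(2 ln(N²/ε)). Then E‖f̂ − f‖_p ≤ 3·min_{i∈I_N} ‖f − f_i‖_p + 2 Q₁(p)·ε·√(2 ln(N²/ε)) + 2Lε, where Q₁(p) = 1 for p ∈ [1,2], and Q₁(p) = max_{i∈I_N, i≠i*} (‖f_{i*} − f_i‖_{2p−2}/‖f_{i*} − f_i‖_p)^{p−1} for p ∈ (2,∞). -/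
open MeasureTheory
open scoped ENNReal

lemma aux_meas {α : Type*} [MeasurableSpace α] {g ψ : α → ℝ} (s c : ℝ) (hg : Measurable g)
    (hψ : ∀ t, ψ t = |g t| ^ s * Real.sign (g t) / c ^ s) : Measurable ψ := by
  have h1 : Measurable Real.sign := by
    unfold Real.sign
    exact Measurable.ite measurableSet_Iio measurable_const
      (Measurable.ite measurableSet_Ioi measurable_const measurable_const)
  have : ψ = fun t => |g t| ^ s * Real.sign (g t) / c ^ s := funext hψ
  rw [this]
  have h2 : Measurable fun t => |g t| ^ s := (hg.abs).pow_const s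
  exact (h2.mul (h1.comp hg)).div_const _

lemma aux_sign (x : ℝ) : |Real.sign x| ≤ 1 := by
  rcases Real.sign_apply_eq x with h | h | h <;> rw [h] <;> norm_num

lemma aux_one {α : Type*} [MeasurableSpace α] {μ : Measure α} [IsProbabilityMeasure μ]
    {g ψ : α → ℝ} (c : ℝ)
    (hψ : ∀ t, ψ t = |g t| ^ (0:ℝ) * Real.sign (g t) / c ^ (0:ℝ)) (r : ℝ≥0∞) :
    eLpNorm ψ r μ ≤ 1 := by
  have h : ∀ᵐ t ∂μ, ‖ψ t‖ ≤ 1 := Filter.Eventually.of_forall fun t => by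
    rw [hψ]; simpa using aux_sign (g t)
  simpa using eLpNorm_le_of_ae_bound (p := r) h

lemma aux_norm {α : Type*} [MeasurableSpace α] {μ : Measure α}
    {g ψ : α → ℝ} (s c : ℝ) (hs : 0 < s) (hc : 0 < c)
    (hψ : ∀ t, ψ t = |g t| ^ s * Real.sign (g t) / c ^ s) (r : ℝ≥0∞) :
    eLpNorm ψ r μ ≤ (eLpNorm g (r * ENNReal.ofReal s) μ / ENNReal.ofReal c) ^ s := by
  have h1 : eLpNorm ψ r μ ≤ eLpNorm ((c ^ s)⁻¹ • fun t => ‖g t‖ ^ s) r μ := by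
    refine eLpNorm_mono fun t => ?_
    rw [hψ]
    have hcs := Real.rpow_pos_of_pos hc s
    have hgs : 0 ≤ |g t| ^ s := by positivity
    simp only [Pi.smul_apply, smul_eq_mul, Real.norm_eq_abs, abs_mul, abs_div, abs_inv,
      abs_of_pos hcs, abs_of_nonneg hgs]
    rw [div_eq_inv_mul]
    gcongr
    exact mul_le_of_le_one_right hgs (aux_sign _)
  refine h1.trans (le_of_eq ?_)
  rw [eLpNorm_const_smul, eLpNorm_norm_rpow _ hs, ENNReal.div_rpow_of_nonneg _ _ hs.le,
    ENNReal.ofReal_rpow_of_pos hc, ENNReal.div_eq_inv_mul]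
  congr 1
  have hcs := Real.rpow_pos_of_pos hc s
  rw [Real.enorm_eq_ofReal (by positivity), ENNReal.ofReal_inv_of_pos hcs]

lemma aux_dual {α : Type*} [MeasurableSpace α] {μ : Measure α}
    {g ψ : α → ℝ} (p : ℝ≥0∞) (hp : 1 ≤ p) (hp' : p ≠ ⊤) (hg : Measurable g)
    (hgp : eLpNorm g p μ ≠ ⊤) (hc : 0 < (eLpNorm g p μ).toReal)
    (hψ : ∀ t, ψ t = |g t| ^ (p.toReal - 1) * Real.sign (g t) /
      (eLpNorm g p μ).toReal ^ (p.toReal - 1)) :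
    ∫ t, ψ t * g t ∂μ = (eLpNorm g p μ).toReal := by
  have hp1 : 1 ≤ p.toReal := by
    simpa using (ENNReal.toReal_le_toReal (by simp) hp').2 hp
  have hp0 : p ≠ 0 := (lt_of_lt_of_le one_pos hp).ne'
  set c := (eLpNorm g p μ).toReal with hcdef
  have h1 : ∀ t, ψ t * g t = (‖g t‖ ^ p.toReal) / c ^ (p.toReal - 1) := by
    intro t
    rw [hψ, div_mul_eq_mul_div, mul_assoc, Real.norm_eq_abs]
    congr 1
    rcases eq_or_ne (g t) 0 with h | h
    · simp [h]; rw [Real.zero_rpow (by linarith)]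
    · have : Real.sign (g t) * g t = |g t| := by
        rcases lt_or_gt_of_ne h with h | h
        · rw [Real.sign_of_neg h, abs_of_neg h]; ring
        · rw [Real.sign_of_pos h, abs_of_pos h]; ring
      rw [this, Real.rpow_sub_one (abs_pos.2 h).ne']
      field_simp [(abs_pos.2 h).ne']
  simp_rw [h1]
  rw [integral_div]
  have hm : MemLp g p μ := ⟨hg.aestronglyMeasurable, lt_top_iff_ne_top.2 hgp⟩
  have h2 := hm.eLpNorm_eq_integral_rpow_norm hp0 hp'
  have hnn : 0 ≤ ∫ a, ‖g a‖ ^ p.toReal ∂μ := integral_nonneg fun _ => by positivity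
  have h3 : c = (∫ a, ‖g a‖ ^ p.toReal ∂μ) ^ p.toReal⁻¹ := by
    rw [hcdef, h2, ENNReal.toReal_ofReal (by positivity)]
  have h4 : ∫ a, ‖g a‖ ^ p.toReal ∂μ = c ^ p.toReal := by
    rw [h3, Real.rpow_inv_rpow hnn (by linarith)]
  rw [h4, ← Real.rpow_sub hc]; simp

lemma aux_holder_s3 {α : Type*} [MeasurableSpace α] {μ : Measure α} {p q : ℝ≥0∞}
    (hpq : 1 / p + 1 / q = 1) {ψ g : α → ℝ} (hψ : Measurable ψ) (hg : Measurable g)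
    (hψq : eLpNorm ψ q μ ≠ ⊤) (hgp : eLpNorm g p μ ≠ ⊤) :
    Integrable (fun t => ψ t * g t) μ ∧
    |∫ t, ψ t * g t ∂μ| ≤ (eLpNorm ψ q μ).toReal * (eLpNorm g p μ).toReal := by
  have : ENNReal.HolderTriple q p 1 := ⟨by simpa [add_comm] using hpq⟩
  have h := eLpNorm_smul_le_mul_eLpNorm (μ := μ) (p := q) (q := p) (r := 1)
    hg.aestronglyMeasurable hψ.aestronglyMeasurable
  have hi : Integrable (fun t => ψ t * g t) μ := by
    rw [← memLp_one_iff_integrable]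
    exact ⟨(hψ.mul hg).aestronglyMeasurable,
      h.trans_lt (ENNReal.mul_lt_top (lt_top_iff_ne_top.2 hψq) (lt_top_iff_ne_top.2 hgp))⟩
  refine ⟨hi, ?_⟩
  rw [← ENNReal.toReal_mul]
  calc |∫ t, ψ t * g t ∂μ| ≤ ∫ t, ‖ψ t * g t‖ ∂μ := by
          simpa only [Real.norm_eq_abs] using norm_integral_le_integral_norm (μ := μ) (fun t => ψ t * g t)
    _ = (eLpNorm (ψ • g) 1 μ).toReal := by
      rw [eLpNorm_one_eq_lintegral_enorm, integral_norm_eq_lintegral_enorm hi.1]; rfl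
    _ ≤ _ := ENNReal.toReal_mono (ENNReal.mul_ne_top hψq hgp) h

lemma aux_gauss {Ω : Type*} [MeasurableSpace Ω] (P : Measure Ω) [IsProbabilityMeasure P]
    (Z : Ω → ℝ) (hZ : Measurable Z) (σ : NNReal)
    (hlaw : Measure.map Z P = ProbabilityTheory.gaussianReal 0 (σ ^ 2)) (κ : ℝ) (hκ : 0 ≤ κ) :
    P.real {ω | κ * σ < Z ω} ≤ Real.exp (-κ ^ 2 / 2) := by
  rcases eq_or_ne σ 0 with h | h
  · subst h
    have : P {ω | κ * ((0:NNReal):ℝ) < Z ω} = 0 := by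
      have h2 : {ω | κ * ((0:NNReal):ℝ) < Z ω} = Z ⁻¹' Set.Ioi 0 := by ext; simp
      rw [h2, ← Measure.map_apply hZ measurableSet_Ioi, hlaw]
      simp
    rw [Measure.real, this]; simp; positivity
  · have hs : ProbabilityTheory.HasSubgaussianMGF Z (σ ^ 2) P := by
      constructor
      · intro t
        have := ProbabilityTheory.integrable_exp_mul_gaussianReal (μ := 0) (v := σ ^ 2) t
        rw [← hlaw] at this
        exact this.comp_measurable hZ
      · intro t
        rw [ProbabilityTheory.mgf_gaussianReal hlaw]; simp
    have h1 := hs.measure_ge_le (ε := κ * σ) (by positivity)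
    have h2 : P.real {ω | κ * σ < Z ω} ≤ P.real {ω | κ * σ ≤ Z ω} :=
      measureReal_mono fun ω (hω : κ * σ < Z ω) => show κ * σ ≤ Z ω from le_of_lt hω
    refine h2.trans (h1.trans (le_of_eq ?_))
    congr 1
    have : (σ:ℝ) ≠ 0 := by exact_mod_cast h
    push_cast
    field_simp

lemma aux_conj {p q : ℝ≥0∞} (hp : 1 < p) (hp' : p ≠ ⊤) (hpq : 1 / p + 1 / q = 1) :
    q * ENNReal.ofReal (p.toReal - 1) = p := by
  have hp0 : p ≠ 0 := (lt_trans one_pos hp).ne'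
  have hqt : q ≠ ⊤ := by
    rintro rfl
    simp at hpq
    exact hp.ne' hpq
  have hq0 : q ≠ 0 := by
    rintro rfl
    simp at hpq
  have hp1 : 1 < p.toReal := by
    simpa using (ENNReal.toReal_lt_toReal (by simp) hp').2 hp
  have hqpos : 0 < q.toReal := ENNReal.toReal_pos hq0 hqt
  have h := congrArg ENNReal.toReal hpq
  rw [ENNReal.toReal_add (by simp [hp0]) (by simp [hq0])] at h
  simp at h
  have h2 : q.toReal * (p.toReal - 1) = p.toReal := by
    field_simp at h
    linarith
  rw [← ENNReal.ofReal_toReal hqt, ← ENNReal.ofReal_mul (by positivity),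
    h2, ENNReal.ofReal_toReal hp']

lemma aux_two {p : ℝ≥0∞} (hp' : p ≠ ⊤) :
    2 * ENNReal.ofReal (p.toReal - 1) = 2 * p - 2 := by
  rw [ENNReal.ofReal_sub _ (by norm_num), ENNReal.ofReal_toReal hp', ENNReal.mul_sub (by simp)]
  simp

lemma aux_q {α : Type*} [MeasurableSpace α] {μ : Measure α} [IsProbabilityMeasure μ]
    {g ψ : α → ℝ} {p q : ℝ≥0∞} (hp : 1 ≤ p) (hp' : p ≠ ⊤) (hpq : 1 / p + 1 / q = 1)
    (hgp : eLpNorm g p μ ≠ ⊤) (hc : 0 < (eLpNorm g p μ).toReal)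
    (hψ : ∀ t, ψ t = |g t| ^ (p.toReal - 1) * Real.sign (g t) /
      (eLpNorm g p μ).toReal ^ (p.toReal - 1)) :
    eLpNorm ψ q μ ≤ 1 := by
  rcases hp.eq_or_lt with h | h
  · subst h
    exact aux_one (g := g) (eLpNorm g 1 μ).toReal (by simpa using hψ) q
  · have hp1 : 1 < p.toReal := by
      simpa using (ENNReal.toReal_lt_toReal (by simp) hp').2 h
    refine (aux_norm _ _ (by linarith) hc hψ q).trans ?_
    rw [aux_conj h hp' hpq, ENNReal.ofReal_toReal hgp]
    exact ENNReal.rpow_le_one ENNReal.div_self_le_one (by linarith)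

lemma aux_2a {α : Type*} [MeasurableSpace α] {μ : Measure α} [IsProbabilityMeasure μ]
    {g ψ : α → ℝ} {p : ℝ≥0∞} (hp : 1 ≤ p) (hp' : p ≠ ⊤) (hp2 : p ≤ 2) (hg : Measurable g)
    (hgp : eLpNorm g p μ ≠ ⊤) (hc : 0 < (eLpNorm g p μ).toReal)
    (hψ : ∀ t, ψ t = |g t| ^ (p.toReal - 1) * Real.sign (g t) /
      (eLpNorm g p μ).toReal ^ (p.toReal - 1)) :
    (eLpNorm ψ 2 μ).toReal ≤ 1 := by
  suffices eLpNorm ψ 2 μ ≤ 1 by simpa using ENNReal.toReal_mono (by simp) this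
  rcases hp.eq_or_lt with h | h
  · subst h
    exact aux_one (g := g) (eLpNorm g 1 μ).toReal (by simpa using hψ) 2
  · have hp1 : 1 < p.toReal := by
      simpa using (ENNReal.toReal_lt_toReal (by simp) hp').2 h
    refine (aux_norm _ _ (by linarith) hc hψ 2).trans ?_
    rw [aux_two hp', ENNReal.ofReal_toReal hgp]
    refine ENNReal.rpow_le_one (le_trans ?_ (ENNReal.div_self_le_one (a := eLpNorm g p μ)))
      (by linarith)
    · gcongr
      refine eLpNorm_le_eLpNorm_of_exponent_le ?_ hg.aestronglyMeasurable
      rw [tsub_le_iff_right, two_mul]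
      gcongr

lemma aux_2b {α : Type*} [MeasurableSpace α] {μ : Measure α}
    {g ψ : α → ℝ} {p : ℝ≥0∞} (hp : 1 < p) (hp' : p ≠ ⊤)
    (hg2 : eLpNorm g (2 * p - 2) μ ≠ ⊤)
    (hgp : eLpNorm g p μ ≠ ⊤) (hc : 0 < (eLpNorm g p μ).toReal)
    (hψ : ∀ t, ψ t = |g t| ^ (p.toReal - 1) * Real.sign (g t) /
      (eLpNorm g p μ).toReal ^ (p.toReal - 1)) :
    (eLpNorm ψ 2 μ).toReal ≤
      ((eLpNorm g (2 * p - 2) μ).toReal / (eLpNorm g p μ).toReal) ^ (p.toReal - 1) := by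
  have hp1 : 1 < p.toReal := by
    simpa using (ENNReal.toReal_lt_toReal (by simp) hp').2 hp
  have h := aux_norm (μ := μ) _ _ (by linarith) hc hψ 2
  rw [aux_two hp', ENNReal.ofReal_toReal hgp] at h
  rw [← ENNReal.toReal_div, ENNReal.toReal_rpow]
  refine ENNReal.toReal_mono ?_ h
  refine ENNReal.rpow_ne_top_of_nonneg (by linarith) (ENNReal.div_ne_top hg2 ?_)
  intro h0
  simp [h0] at hc

lemma aux_prob (d : ℕ) : IsProbabilityMeasure (cubeMeasure d) := by
  constructor
  simp [cubeMeasure, Real.volume_Icc_pi]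

/-- Corollary 1 of the paper: oracle inequality for the aggregation
procedure with the `(0,p)`-good probe set `Ψ̃` of `L^p`-duality representers,
`δ = ε` and `κ = √(2 ln(N²/ε))`. -/
theorem stmt_3
    {d N : ℕ} (hd : 1 ≤ d) (hN : 2 ≤ N)
    (p q : ℝ≥0∞) (hp : 1 ≤ p) (hp' : p ≠ ⊤) (hpq : 1 / p + 1 / q = 1)
    (f : (Fin d → ℝ) → ℝ) (F : Fin N → (Fin d → ℝ) → ℝ)
    (hfm : Measurable f) (hFm : ∀ i, Measurable (F i))
    (hf : eLpNorm f p (cubeMeasure d) ≠ ⊤)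
    (hF : ∀ i, eLpNorm (F i) p (cubeMeasure d) ≠ ⊤)
    -- the `f_i` are pairwise distinct, and their pairwise differences have finite
    -- `L^{2p-2}` norms
    (hFdist : ∀ i j, i ≠ j → 0 < Lnorm p (fun t => F i t - F j t))
    (hdiff : ∀ i j, i ≠ j →
      eLpNorm (fun t => F i t - F j t) (2 * p - 2) (cubeMeasure d) ≠ ⊤)
    (L : ℝ) (hL : L = max (Lnorm p f) (⨆ i, Lnorm p (F i)))
    (ε : ℝ) (hε0 : 0 < ε) (hε1 : ε < 1)
    -- the probe functions `ψ_{ij} = |f_i - f_j|^{p-1} sign(f_i - f_j) / ‖f_i - f_j‖_p^{p-1}`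
    (ψ : Fin N → Fin N → (Fin d → ℝ) → ℝ)
    (hψdef : ∀ i j, i ≠ j → ∀ t, ψ i j t =
      |F i t - F j t| ^ (p.toReal - 1) * Real.sign (F i t - F j t) /
        Lnorm p (fun u => F i u - F j u) ^ (p.toReal - 1))
    -- the Gaussian noise functionals
    {Ω : Type} [MeasurableSpace Ω] (P : Measure Ω) [IsProbabilityMeasure P]
    (Z : Fin N → Fin N → Ω → ℝ) (hZm : ∀ i j, Measurable (Z i j))
    (hZlaw : ∀ i j, i ≠ j → Measure.map (Z i j) P =
      ProbabilityTheory.gaussianReal 0 ((eLpNorm (ψ i j) 2 (cubeMeasure d)).toNNReal ^ 2))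
    (hZanti : ∀ i j, i ≠ j → ∀ᵐ ω ∂P, Z j i ω = - Z i j ω)
    -- the selection procedure with `κ = √(2 ln(N²/ε))`
    (κ : ℝ) (hκ : κ = Real.sqrt (2 * Real.log ((N : ℝ) ^ 2 / ε)))
    (Mhat : Fin N → Ω → ℝ)
    (hM : ∀ i ω, Mhat i ω =
      ⨆ jl : {jl : Fin N × Fin N // jl.1 ≠ jl.2},
        (|(∫ t, ψ jl.1.1 jl.1.2 t * (f t - F i t) ∂(cubeMeasure d)) +
            ε * Z jl.1.1 jl.1.2 ω| - ε * κ * Lnorm 2 (ψ jl.1.1 jl.1.2)) /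
          Lnorm q (ψ jl.1.1 jl.1.2))
    (ihat : Ω → Fin N) (hihatm : Measurable ihat)
    (hmin : ∀ ω i, Mhat (ihat ω) ω ≤ Mhat i ω)
    (istar : Fin N)
    (histar : ∀ i, Lnorm p (fun t => f t - F istar t) ≤ Lnorm p (fun t => f t - F i t))
    -- the constant `Q₁(p)`
    (Q1 : ℝ)
    (hQ1a : p ≤ 2 → Q1 = 1)
    (hQ1b : 2 < p → Q1 =
      ⨆ j : {j : Fin N // j ≠ istar},
        (Lnorm (2 * p - 2) (fun t => F istar t - F j.1 t) /
          Lnorm p (fun t => F istar t - F j.1 t)) ^ (p.toReal - 1)) :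
    ∫ ω, Lnorm p (fun t => F (ihat ω) t - f t) ∂P ≤
      3 * (⨅ i, Lnorm p (fun t => f t - F i t))
        + 2 * Q1 * ε * Real.sqrt (2 * Real.log ((N : ℝ) ^ 2 / ε))
        + 2 * L * ε := by
  have := aux_prob d
  -- basic facts
  have hκ0 : 0 ≤ κ := hκ ▸ Real.sqrt_nonneg _
  have hN0 : (2:ℝ) ≤ N := by exact_mod_cast hN
  have : NeZero N := ⟨by omega⟩
  have hsubm : ∀ i j, Measurable (fun t => F i t - F j t) := fun i j => (hFm i).sub (hFm j)
  have hfsubm : ∀ i, Measurable (fun t => f t - F i t) := fun i => hfm.sub (hFm i)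
  have hMf : MemLp f p (cubeMeasure d) := ⟨hfm.aestronglyMeasurable, lt_top_iff_ne_top.2 hf⟩
  have hMF : ∀ i, MemLp (F i) p (cubeMeasure d) := fun i =>
    ⟨(hFm i).aestronglyMeasurable, lt_top_iff_ne_top.2 (hF i)⟩
  have hsubF : ∀ i j, eLpNorm (fun t => F i t - F j t) p (cubeMeasure d) ≠ ⊤ := fun i j =>
    ((hMF i).sub (hMF j)).2.ne
  have hsubf : ∀ i, eLpNorm (fun t => f t - F i t) p (cubeMeasure d) ≠ ⊤ := fun i =>
    (hMf.sub (hMF i)).2.ne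
  have hcomm : ∀ i, Lnorm p (fun t => F i t - f t) = Lnorm p (fun t => f t - F i t) := by
    intro i
    unfold Lnorm
    congr 1
    exact eLpNorm_sub_comm (F i) f p _
  have htri : ∀ i, Lnorm p (fun t => F i t - f t) ≤
      Lnorm p (fun t => F istar t - F i t) + Lnorm p (fun t => f t - F istar t) := by
    intro i
    rw [hcomm]
    unfold Lnorm
    rw [← ENNReal.toReal_add (hsubF _ _) (hsubf _)]
    refine ENNReal.toReal_mono (ENNReal.add_ne_top.2 ⟨hsubF _ _, hsubf _⟩) ?_
    have h := eLpNorm_add_le (hsubm istar i).aestronglyMeasurable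
      (hfsubm istar).aestronglyMeasurable hp (μ := cubeMeasure d)
    convert h using 2
    ext t
    simp
  have hLf : Lnorm p f ≤ L := hL ▸ le_max_left _ _
  have hLF : ∀ i, Lnorm p (F i) ≤ L := fun i => by
    rw [hL]
    exact (le_ciSup (f := fun i => Lnorm p (F i)) (Set.finite_range _).bddAbove i).trans
      (le_max_right _ _)
  have hL0 : 0 ≤ L := le_trans ENNReal.toReal_nonneg hLf
  have h2L : ∀ i, Lnorm p (fun t => F i t - f t) ≤ 2 * L := by
    intro i
    have h1 : Lnorm p (fun t => F i t - f t) ≤ Lnorm p (F i) + Lnorm p f := by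
      unfold Lnorm
      rw [← ENNReal.toReal_add (hF i) hf]
      exact ENNReal.toReal_mono (ENNReal.add_ne_top.2 ⟨hF i, hf⟩)
        (eLpNorm_sub_le (hFm i).aestronglyMeasurable hfm.aestronglyMeasurable hp)
    linarith [hLF i]
  -- the probes
  have hψm : ∀ i j, i ≠ j → Measurable (ψ i j) := fun i j hij =>
    aux_meas _ _ (hsubm i j) (hψdef i j hij)
  have hψq : ∀ i j, i ≠ j → eLpNorm (ψ i j) q (cubeMeasure d) ≤ 1 := fun i j hij =>
    aux_q hp hp' hpq (hsubF i j) (hFdist i j hij) (hψdef i j hij)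
  have hψqt : ∀ i j, i ≠ j → eLpNorm (ψ i j) q (cubeMeasure d) ≠ ⊤ := fun i j hij =>
    ((hψq i j hij).trans_lt ENNReal.one_lt_top).ne
  have hψq1 : ∀ i j, i ≠ j → Lnorm q (ψ i j) ≤ 1 := fun i j hij => by
    simpa [Lnorm] using ENNReal.toReal_mono (by simp) (hψq i j hij)
  have hdual : ∀ i j, i ≠ j → ∫ t, ψ i j t * (F i t - F j t) ∂(cubeMeasure d) =
      Lnorm p (fun t => F i t - F j t) := fun i j hij =>
    aux_dual p hp hp' (hsubm i j) (hsubF i j) (hFdist i j hij) (hψdef i j hij)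
  have hψqe : ∀ i j, i ≠ j → Lnorm q (ψ i j) = 1 := fun i j hij => by
    refine le_antisymm (hψq1 i j hij) ?_
    have h := (aux_holder_s3 hpq (hψm i j hij) (hsubm i j) (hψqt i j hij) (hsubF i j)).2
    rw [hdual i j hij] at h
    have h0 := hFdist i j hij
    have h3 : Lnorm p (fun t => F i t - F j t) ≤
      Lnorm q (ψ i j) * Lnorm p (fun t => F i t - F j t) := (le_abs_self _).trans h
    exact le_of_mul_le_mul_right (by linarith) h0
  have hint : ∀ i j k, i ≠ j → Integrable (fun t => ψ i j t * (f t - F k t)) (cubeMeasure d) ∧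
      |∫ t, ψ i j t * (f t - F k t) ∂(cubeMeasure d)| ≤ Lnorm p (fun t => f t - F k t) := by
    intro i j k hij
    have h := aux_holder_s3 hpq (hψm i j hij) (hfsubm k) (hψqt i j hij) (hsubf k)
    refine ⟨h.1, h.2.trans ?_⟩
    have h1 : (eLpNorm (ψ i j) q (cubeMeasure d)).toReal = 1 := hψqe i j hij
    rw [h1, one_mul]
    rfl
  -- `‖ψ‖₂ ≤ Q₁`
  have hQ : ∀ j, j ≠ istar → Lnorm 2 (ψ istar j) ≤ Q1 := by
    intro j hj
    rcases le_or_gt p 2 with h | h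
    · rw [hQ1a h]
      exact aux_2a hp hp' h (hsubm _ _) (hsubF _ _) (hFdist _ _ hj.symm) (hψdef _ _ hj.symm)
    · rw [hQ1b h]
      refine le_trans (aux_2b (lt_of_le_of_lt (by norm_num) h) hp' (hdiff _ _ hj.symm)
        (hsubF _ _) (hFdist _ _ hj.symm) (hψdef _ _ hj.symm)) ?_
      exact le_ciSup (f := fun j : {j : Fin N // j ≠ istar} =>
        (Lnorm (2 * p - 2) (fun t => F istar t - F j.1 t) /
          Lnorm p (fun t => F istar t - F j.1 t)) ^ (p.toReal - 1))
        (Set.finite_range _).bddAbove ⟨j, hj⟩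
  have hQ0 : 0 ≤ Q1 := by
    have : Nontrivial (Fin N) := Fin.nontrivial_iff_two_le.2 hN
    obtain ⟨j, hj⟩ := exists_ne istar
    exact le_trans ENNReal.toReal_nonneg (hQ j hj)
  have hinf : (⨅ i, Lnorm p (fun t => f t - F i t)) = Lnorm p (fun t => f t - F istar t) :=
    le_antisymm (ciInf_le (Set.finite_range _).bddBelow istar) (le_ciInf histar)
  rw [hinf, ← hκ]
  set m := Lnorm p (fun t => f t - F istar t) with hm
  have hm0 : 0 ≤ m := ENNReal.toReal_nonneg
  set C := 3 * m + 2 * Q1 * ε * κ with hC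
  have hC0 : 0 ≤ C := by positivity
  -- the bad event
  set B : Fin N × Fin N → Set Ω := fun x => if x.1 = x.2 then ∅ else
    {ω | κ * Lnorm 2 (ψ x.1 x.2) < Z x.1 x.2 ω} with hB
  have hBm : ∀ x, MeasurableSet (B x) := by
    intro x
    simp only [hB]
    split_ifs
    · exact MeasurableSet.empty
    · exact measurableSet_lt measurable_const (hZm _ _)
  have hexp : Real.exp (-κ ^ 2 / 2) = ε / (N:ℝ) ^ 2 := by
    have h1 : 1 ≤ (N:ℝ) ^ 2 / ε := by
      rw [le_div_iff₀ hε0]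
      nlinarith
    have h2 : 0 ≤ Real.log ((N:ℝ) ^ 2 / ε) := Real.log_nonneg h1
    rw [hκ, Real.sq_sqrt (by positivity)]
    have h3 : -(2 * Real.log ((N:ℝ) ^ 2 / ε)) / 2 = Real.log (((N:ℝ) ^ 2 / ε)⁻¹) := by
      rw [Real.log_inv]
      ring
    rw [h3, Real.exp_log (by positivity), inv_div]
  have hBp : ∀ x, P.real (B x) ≤ ε / (N:ℝ) ^ 2 := by
    intro x
    simp only [hB]
    split_ifs with h
    · simp
      positivity
    · rw [← hexp]
      exact aux_gauss P _ (hZm _ _) _ (hZlaw _ _ h) κ hκ0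
  set U := ⋃ x, B x with hU
  have hUm : MeasurableSet U := MeasurableSet.iUnion hBm
  have hUp : P.real U ≤ ε := by
    calc P.real U ≤ ∑ x, P.real (B x) := measureReal_iUnion_fintype_le _
      _ ≤ ∑ x : Fin N × Fin N, ε / (N:ℝ) ^ 2 := Finset.sum_le_sum fun x _ => hBp x
      _ = ε := by
        simp only [Finset.sum_const, Finset.card_univ, Fintype.card_prod, Fintype.card_fin,
          nsmul_eq_mul]
        push_cast
        field_simp
  -- pointwise bound
  have hanti : ∀ᵐ ω ∂P, ∀ i j, i ≠ j → Z j i ω = - Z i j ω := by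
    rw [ae_all_iff]
    intro i
    rw [ae_all_iff]
    intro j
    by_cases h : i = j
    · simp [h]
    · filter_upwards [hZanti i j h] with ω hω _ using hω
  have hL2 : ∀ i j, i ≠ j → Lnorm 2 (ψ j i) = Lnorm 2 (ψ i j) := by
    intro i j hij
    have h : ψ j i = -ψ i j := by
      ext t
      have h1 : Lnorm p (fun u => F j u - F i u) = Lnorm p (fun u => F i u - F j u) := by
        unfold Lnorm
        congr 1
        exact eLpNorm_sub_comm (F j) (F i) p _
      rw [Pi.neg_apply, hψdef _ _ hij, hψdef _ _ hij.symm, h1, ← neg_sub (F i t) (F j t),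
        Real.sign_neg, abs_neg]
      ring
    unfold Lnorm
    rw [h, eLpNorm_neg]
  have hpt : ∀ᵐ ω ∂P, Lnorm p (fun t => F (ihat ω) t - f t) ≤
      C + U.indicator (fun _ => 2 * L) ω := by
    filter_upwards [hanti] with ω hω
    by_cases hωU : ω ∈ U
    · rw [Set.indicator_of_mem hωU]
      linarith [h2L (ihat ω)]
    rw [Set.indicator_of_notMem hωU, add_zero]
    have hZle : ∀ i j, i ≠ j → Z i j ω ≤ κ * Lnorm 2 (ψ i j) := by
      intro i j hij
      by_contra! hcon
      refine hωU (Set.mem_iUnion.2 ⟨(i, j), ?_⟩)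
      simp only [hB, hij, if_false]
      exact hcon
    have hZabs : ∀ i j, i ≠ j → |Z i j ω| ≤ κ * Lnorm 2 (ψ i j) := by
      intro i j hij
      rw [abs_le']
      refine ⟨hZle i j hij, ?_⟩
      rw [← hω i j hij, ← hL2 i j hij]
      exact hZle j i hij.symm
    have : Nonempty {jl : Fin N × Fin N // jl.1 ≠ jl.2} := by
      have : Nontrivial (Fin N) := Fin.nontrivial_iff_two_le.2 hN
      obtain ⟨j, hj⟩ := exists_ne istar
      exact ⟨⟨(j, istar), hj⟩⟩
    have hMle : Mhat istar ω ≤ m := by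
      rw [hM]
      refine ciSup_le ?_
      rintro ⟨⟨i, j⟩, hij⟩
      simp only at hij ⊢
      rw [hψqe i j hij, div_one]
      have h1 := (hint i j istar hij).2
      have h2 := abs_add_le (∫ t, ψ i j t * (f t - F istar t) ∂(cubeMeasure d)) (ε * Z i j ω)
      rw [abs_mul, abs_of_pos hε0] at h2
      have h3 := mul_le_mul_of_nonneg_left (hZabs i j hij) hε0.le
      linarith
    have hMle' := (hmin ω istar).trans hMle
    generalize ihat ω = k at hMle' ⊢
    rcases eq_or_ne k istar with hk | hk
    · rw [hk, hcomm]
      have : 0 ≤ 2 * Q1 * ε * κ := by positivity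
      linarith
    refine (htri k).trans ?_
    have hk' := hk.symm
    have hg := hdual istar k hk'
    have h1 : ∫ t, ψ istar k t * (F istar t - F k t) ∂(cubeMeasure d) =
        (∫ t, ψ istar k t * (f t - F k t) ∂(cubeMeasure d)) -
        ∫ t, ψ istar k t * (f t - F istar t) ∂(cubeMeasure d) := by
      rw [← integral_sub (hint _ _ _ hk').1 (hint _ _ _ hk').1]
      congr 1
      ext t
      ring
    have h2 := (abs_le.1 (hint istar k istar hk').2).1
    have h3 : |(∫ t, ψ istar k t * (f t - F k t) ∂(cubeMeasure d)) + ε * Z istar k ω|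
        - ε * κ * Lnorm 2 (ψ istar k) ≤ m := by
      refine le_trans ?_ hMle'
      rw [hM]
      have h := le_ciSup (f := fun jl : {jl : Fin N × Fin N // jl.1 ≠ jl.2} =>
        (|(∫ t, ψ jl.1.1 jl.1.2 t * (f t - F k t) ∂(cubeMeasure d)) +
            ε * Z jl.1.1 jl.1.2 ω| - ε * κ * Lnorm 2 (ψ jl.1.1 jl.1.2)) /
          Lnorm q (ψ jl.1.1 jl.1.2)) (Set.finite_range _).bddAbove ⟨(istar, k), hk'⟩
      simp only [hψqe istar k hk', div_one] at h
      exact h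
    have h4 := le_abs_self ((∫ t, ψ istar k t * (f t - F k t) ∂(cubeMeasure d)) + ε * Z istar k ω)
    have h5 := mul_le_mul_of_nonneg_left (abs_le.1 (hZabs istar k hk')).1 hε0.le
    have h6 := mul_le_mul_of_nonneg_left (hQ k hk) (mul_nonneg hε0.le hκ0)
    rw [← hg, h1, hC]
    linarith
  have hIi : Integrable (U.indicator (fun _ => 2 * L)) P :=
    (integrable_const _).indicator hUm
  calc ∫ ω, Lnorm p (fun t => F (ihat ω) t - f t) ∂P
      ≤ ∫ ω, (C + U.indicator (fun _ => 2 * L) ω) ∂P :=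
        integral_mono_of_nonneg (Filter.Eventually.of_forall fun _ => ENNReal.toReal_nonneg)
          ((integrable_const _).add hIi) hpt
    _ = C + P.real U * (2 * L) := by
        rw [integral_add (integrable_const _) hIi, integral_indicator_const _ hUm]
        simp
    _ ≤ C + 2 * L * ε := by nlinarith
end

section
/- In the worst-case family setting described in the context, for every measurable selection rule ĩ : ℝ^N → I_N one has max_{i∈I_N} ∫_{ℝ^N} ‖f̄_{ĩ(y)} − f̄_i‖_p dP_i(y) ≥ (1/(12√3))·K_p·ε·√(ln(N−1)), where K_p := (2h*)^{1/p − 1/2} (with 1/p := 0 when p = ∞). -/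
open MeasureTheory
open scoped ENNReal

open ProbabilityTheory

lemma gauss_half (m : ℝ) (v : NNReal) : gaussianReal m v (Set.Ioi m) ≤ 1/2 := by
  have h1 : gaussianReal m v (Set.Ioi m) = gaussianReal m v (Set.Iio m) := by
    have h := gaussianReal_map_const_sub (μ := m) (v := v) (2*m)
    have h2 : 2 * m - m = m := by ring
    rw [h2] at h
    conv_lhs => rw [← h]
    rw [Measure.map_apply (by fun_prop) measurableSet_Ioi]
    congr 1
    ext x
    simp only [Set.mem_preimage, Set.mem_Ioi, Set.mem_Iio]
    constructor <;> intro h <;> linarith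
  have h2 : gaussianReal m v (Set.Ioi m) + gaussianReal m v (Set.Iio m) ≤ 1 := by
    rw [← measure_union (by
      rw [Set.disjoint_left]; intro x hx hy; exact lt_asymm (Set.mem_Ioi.1 hx) (Set.mem_Iio.1 hy)) measurableSet_Iio]
    exact prob_le_one
  rw [← h1, ← two_mul] at h2
  rw [ENNReal.le_div_iff_mul_le (by simp) (by simp), mul_comm]
  exact h2

lemma gauss_lint (m : ℝ) (hm : 0 ≤ m) (v : NNReal) (hv : v ≠ 0) (g : ℝ → ℝ≥0∞) (hg : Measurable g)
    (hg1 : ∀ x, g x ≤ 1) :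
    ∫⁻ x, g x ∂(gaussianReal m v) ≤
      1/2 + ENNReal.ofReal (Real.exp (m^2/(2*v))) * ∫⁻ x, g x ∂(gaussianReal 0 v) := by
  have hv0 : (0:ℝ) < v := by positivity
  rw [← lintegral_add_compl _ (measurableSet_Ioi (a := m))]
  refine add_le_add ?_ ?_
  · calc _ ≤ ∫⁻ x in Set.Ioi m, 1 ∂(gaussianReal m v) := lintegral_mono (fun x => hg1 x)
      _ = gaussianReal m v (Set.Ioi m) := by simp
      _ ≤ _ := gauss_half m v
  · rw [gaussianReal_of_var_ne_zero _ hv, gaussianReal_of_var_ne_zero _ hv,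
      restrict_withDensity measurableSet_Ioi.compl,
      lintegral_withDensity_eq_lintegral_mul _ (measurable_gaussianPDF _ _) hg,
      lintegral_withDensity_eq_lintegral_mul _ (measurable_gaussianPDF _ _) hg,
      ← lintegral_const_mul _ ((measurable_gaussianPDF _ _).mul hg)]
    refine le_trans (setLIntegral_mono' measurableSet_Ioi.compl (g := fun x => ENNReal.ofReal (Real.exp (m^2/(2*v))) * ((gaussianPDF 0 v * g) x)) ?_) (setLIntegral_le_lintegral _ _)
    intro x hx
    simp only [Set.mem_compl_iff, Set.mem_Ioi, not_lt] at hx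
    simp only [Pi.mul_apply, ← mul_assoc]
    gcongr
    rw [gaussianPDF, gaussianPDF, ← ENNReal.ofReal_mul (by positivity)]
    apply ENNReal.ofReal_le_ofReal
    simp only [gaussianPDFReal]
    rw [mul_left_comm, ← Real.exp_add]
    gcongr
    rw [← add_div]
    gcongr
    nlinarith [mul_nonneg hm (sub_nonneg.2 hx)]

lemma pi_bound {N : ℕ} (i : Fin N) (m : ℝ) (hm : 0 ≤ m) (v : NNReal) (hv : v ≠ 0)
    (A : Set (Fin N → ℝ)) (hA : MeasurableSet A) :
    Measure.pi (fun j => gaussianReal (if j = i then m else 0) v) A ≤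
      1/2 + ENNReal.ofReal (Real.exp (m^2/(2*v))) *
        Measure.pi (fun _ : Fin N => gaussianReal 0 v) A := by
  obtain ⟨n, rfl⟩ : ∃ n, N = n + 1 := ⟨N - 1, by have := i.2; omega⟩
  have h1 := (measurePreserving_piFinSuccAbove (fun j : Fin (n+1) => gaussianReal (if j = i then m else 0) v) i).symm
  have h0 := (measurePreserving_piFinSuccAbove (fun j : Fin (n+1) => gaussianReal 0 v) i).symm
  simp only [Fin.succAbove_ne, if_true, if_false] at h1
  rw [← h1.measure_preimage hA.nullMeasurableSet, ← h0.measure_preimage hA.nullMeasurableSet]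
  have hA' := h0.measurable hA
  rw [Measure.prod_apply hA', Measure.prod_apply hA']
  exact gauss_lint m hm v hv _ (measurable_measure_prodMk_left hA') (fun x => prob_le_one)

lemma exists_small {N : ℕ} (hN : 0 < N) {Ω : Type*} [MeasurableSpace Ω] (μ : Measure Ω) [IsProbabilityMeasure μ]
    (f : Ω → Fin N) (hf : Measurable f) : ∃ i, μ.real (f ⁻¹' {i}) ≤ 1 / N := by
  by_contra! h
  have hs : ∑ i, μ.real (f ⁻¹' {i}) = 1 := by
    have := sum_measureReal_preimage_singleton (μ := μ) (f := f) Finset.univ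
      (fun y _ => hf (measurableSet_singleton y))
    simpa using this
  have : ∑ i : Fin N, (1 / N : ℝ) < ∑ i, μ.real (f ⁻¹' {i}) :=
    Finset.sum_lt_sum_of_nonempty ⟨⟨0, hN⟩, Finset.mem_univ _⟩ (fun i _ => h i)
  rw [hs] at this
  simp at this
  rw [mul_inv_cancel₀ (by positivity)] at this
  exact lt_irrefl _ this

lemma lnorm_diff {d : ℕ} (L h : ℝ) (hL : 0 < L) (hh : 0 < h) (p : ℝ≥0∞) (hp : 2 < p)
    (S T : Set (Fin d → ℝ)) (hS : MeasurableSet S) (hT : MeasurableSet T)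
    (hS1 : S ⊆ Set.Icc 0 1) (hT1 : T ⊆ Set.Icc 0 1) (hd : Disjoint S T)
    (hSv : volume S = ENNReal.ofReal h) (hTv : volume T = ENNReal.ofReal h) :
    Lnorm p (fun t => S.indicator (fun _ => L) t - T.indicator (fun _ => L) t) =
      L * (2 * h) ^ ((1 / p).toReal) := by
  have hp0 : p ≠ 0 := (lt_trans (by norm_num) hp).ne'
  have hμ : cubeMeasure d (S ∪ T) = ENNReal.ofReal (2 * h) := by
    rw [cubeMeasure, Measure.restrict_apply (hS.union hT),
      Set.inter_eq_left.2 (Set.union_subset hS1 hT1), measure_union hd hT, hSv, hTv,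
      ← ENNReal.ofReal_add hh.le hh.le, two_mul]
  unfold Lnorm
  rw [eLpNorm_congr_norm_ae (g := (S ∪ T).indicator (fun _ => L)),
    eLpNorm_indicator_const' (hS.union hT) (by rw [hμ]; simpa using hh) hp0, hμ,
    ENNReal.toReal_mul, ← ENNReal.toReal_rpow, ENNReal.toReal_ofReal (by positivity),
    ENNReal.toReal_div]
  · simp [abs_of_pos hL]
  · refine Filter.Eventually.of_forall fun t => ?_
    by_cases h1 : t ∈ S
    · have h2 : t ∉ T := Set.disjoint_left.1 hd h1
      simp [h1, h2]
    · by_cases h2 : t ∈ T <;> simp [h1, h2]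

/-- Theorem 2 of the paper, lower bound: for the worst-case family
`f̄_i = L·1_{B_i}`, any selection rule `ĩ` incurs a risk of at least
`(1/(12√3))·K_p·ε·√(ln(N-1))` under one of the measures `P_i`, where
`K_p = (2h*)^{1/p - 1/2}`. -/
theorem stmt_6
    {d N : ℕ} (hd : 1 ≤ d) (hN : 4 ≤ N)
    (L ε : ℝ) (hL : 0 < L) (hε : 0 < ε)
    (hεL : ε ≤ L / Real.sqrt (N * Real.log N))
    (p : ℝ≥0∞) (hp : 2 < p)
    (hstar : ℝ)
    (hstardef : hstar = ε ^ 2 / L ^ 2 * (5 / 6 * Real.log ((N : ℝ) - 1) - Real.log 2))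
    (hstarpos : 0 < hstar) (hstarle : hstar ≤ 1 / N)
    -- the disjoint sets `B_i ⊆ [0,1]^d` of measure `h*`
    (B : Fin N → Set (Fin d → ℝ)) (hBmeas : ∀ i, MeasurableSet (B i))
    (hBsub : ∀ i, B i ⊆ Set.Icc 0 1)
    (hBdisj : Pairwise (Function.onFun Disjoint B))
    (hBvol : ∀ i, volume (B i) = ENNReal.ofReal hstar)
    -- the worst-case family `f̄_i = L·1_{B_i}`
    (Fbar : Fin N → (Fin d → ℝ) → ℝ)
    (hFbar : ∀ i t, Fbar i t = (B i).indicator (fun _ => L) t)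
    -- `P_i`: the law of the sufficient statistic under `f = f̄_i`
    (P : Fin N → Measure (Fin N → ℝ))
    (hP : ∀ i, P i = Measure.pi fun j => ProbabilityTheory.gaussianReal
      (if j = i then L * hstar else 0) (Real.toNNReal (ε ^ 2 * hstar)))
    -- an arbitrary measurable selection rule
    (itil : (Fin N → ℝ) → Fin N) (hitil : Measurable itil) :
    1 / (12 * Real.sqrt 3) * (2 * hstar) ^ ((1 / p).toReal - 1 / 2) * ε *
        Real.sqrt (Real.log ((N : ℝ) - 1)) ≤
      ⨆ i, ∫ y, Lnorm p (fun t => Fbar (itil y) t - Fbar i t) ∂(P i) := by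
  have hN4 : (4:ℝ) ≤ N := by exact_mod_cast hN
  set v : NNReal := Real.toNNReal (ε ^ 2 * hstar) with hvdef
  have hvr : (v : ℝ) = ε ^ 2 * hstar := Real.coe_toNNReal _ (by positivity)
  have hv : v ≠ 0 := by
    intro h; rw [h] at hvr; have : 0 < ε ^ 2 * hstar := by positivity
    simp at hvr; rcases hvr with h | h <;> linarith
  set l := Real.log ((N : ℝ) - 1) with hl
  set a := 5 / 6 * l - Real.log 2 with ha
  have hlog2 : 0 < Real.log 2 := Real.log_pos (by norm_num)
  have hl3 : Real.log 3 ≤ l := Real.log_le_log (by norm_num) (by linarith)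
  have h98 : 3 * Real.log 2 ≤ 2 * Real.log 3 := by
    have : Real.log ((2:ℝ)^3) ≤ Real.log ((3:ℝ)^2) := Real.log_le_log (by norm_num) (by norm_num)
    rw [Real.log_pow, Real.log_pow] at this
    exact_mod_cast this
  have hal : l ≤ 6 * a := by rw [ha]; linarith
  have hlpos : 0 < l := by linarith
  have hapos : 0 < a := by linarith
  obtain ⟨i, hi⟩ := exists_small (by omega) (Measure.pi (fun _ : Fin N => gaussianReal 0 v)) itil hitil
  have hA : MeasurableSet (itil ⁻¹' {i}) := hitil (measurableSet_singleton i)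
  have : IsProbabilityMeasure (P i) := by rw [hP]; infer_instance
  have hexp : (L * hstar) ^ 2 / (2 * v) = a / 2 := by
    rw [hvr, hstardef]; field_simp
  have hea : Real.exp (a / 2) ≤ 5 / 12 * N := by
    have h1 : l ≤ Real.log N := Real.log_le_log (by linarith) (by linarith)
    have h2 : a / 2 ≤ Real.log (Real.sqrt (N / 2)) := by
      rw [Real.log_sqrt (by positivity), Real.log_div (by positivity) (by norm_num)]
      rw [ha]; linarith
    calc Real.exp (a / 2) ≤ Real.exp (Real.log (Real.sqrt (N / 2))) := Real.exp_le_exp.2 h2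
      _ = Real.sqrt (N / 2) := Real.exp_log (by positivity)
      _ ≤ _ := by
        apply Real.sqrt_le_iff.2
        constructor
        · positivity
        · nlinarith
  have hPA : (P i).real (itil ⁻¹' {i}) ≤ 11 / 12 := by
    have h := pi_bound i (L * hstar) (by positivity) v hv _ hA
    rw [← hP i, hexp] at h
    have h' := ENNReal.toReal_mono (by
      refine ENNReal.add_ne_top.2 ⟨by simp, ENNReal.mul_ne_top (by simp) (measure_ne_top _ _)⟩) h
    rw [ENNReal.toReal_add (by simp) (ENNReal.mul_ne_top (by simp) (measure_ne_top _ _)),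
      ENNReal.toReal_mul, ENNReal.toReal_ofReal (Real.exp_nonneg _)] at h'
    change (P i).real _ ≤ _ + _ * (Measure.pi (fun _ : Fin N => gaussianReal 0 v)).real _ at h'
    have h3 : Real.exp (a / 2) * (Measure.pi (fun _ : Fin N => gaussianReal 0 v)).real (itil ⁻¹' {i})
        ≤ (5 / 12 * N) * (1 / N) := by gcongr
    have h4 : (5 / 12 * (N:ℝ)) * (1 / N) = 5 / 12 := by field_simp
    have h5 : (1 / 2 : ℝ≥0∞).toReal = 1 / 2 := by simp
    rw [h5] at h'
    linarith
  set D := L * (2 * hstar) ^ ((1 / p).toReal) with hD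
  have hDpos : 0 < D := by positivity
  have hfun : (fun y => Lnorm p (fun t => Fbar (itil y) t - Fbar i t)) =
      (itil ⁻¹' {i})ᶜ.indicator (fun _ => D) := by
    funext y
    by_cases hy : itil y = i
    · simp [hy, Lnorm]
    · rw [Set.indicator_of_mem (by simpa using hy)]
      simp only [hFbar]
      exact lnorm_diff L hstar hL hstarpos p hp _ _ (hBmeas _) (hBmeas _) (hBsub _) (hBsub _)
        (hBdisj hy) (hBvol _) (hBvol _)
  refine le_trans ?_ (le_ciSup (Set.finite_range _).bddAbove i)
  rw [hfun, integral_indicator_const _ hA.compl, probReal_compl_eq_one_sub hA, smul_eq_mul]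
  have key : 1 / (12 * Real.sqrt 3) * (2 * hstar) ^ ((1 / p).toReal - 1 / 2) * ε * Real.sqrt l
      ≤ D / 12 := by
    have h2 : 0 < 2 * hstar := by positivity
    rw [Real.rpow_sub h2, ← Real.sqrt_eq_rpow, hD]
    have h3 : ε * Real.sqrt l ≤ L * Real.sqrt 3 * Real.sqrt (2 * hstar) := by
      rw [mul_assoc, ← Real.sqrt_mul (by norm_num)]
      refine (sq_le_sq₀ (by positivity) (by positivity)).1 ?_
      rw [mul_pow, mul_pow, Real.sq_sqrt hlpos.le, Real.sq_sqrt (by positivity), hstardef]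
      have h7 : L ^ 2 * (3 * (2 * (ε ^ 2 / L ^ 2 * a))) = ε ^ 2 * (6 * a) := by
        field_simp; ring
      rw [h7]
      gcongr
    have h4 : 0 < Real.sqrt (2 * hstar) := Real.sqrt_pos.2 h2
    have h5 : 0 < (2 * hstar) ^ ((1 / p).toReal) := by positivity
    generalize (2 * hstar) ^ ((1 / p).toReal) = X at *
    generalize Real.sqrt (2 * hstar) = Y at *
    have h6 : 0 < Real.sqrt 3 := by positivity
    calc _ = X / (12 * (Real.sqrt 3 * Y)) * (ε * Real.sqrt l) := by field_simp
      _ ≤ X / (12 * (Real.sqrt 3 * Y)) * (L * Real.sqrt 3 * Y) := by gcongr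
      _ = _ := by field_simp
  nlinarith
end

section
/- In the worst-case family setting described in the context, for every measurable selection rule ĩ : ℝ^N → I_N one has max_{i∈I_N} P_i({y : ĩ(y) ≠ i}) ≥ 1/6. -/
open MeasureTheory
open scoped ENNReal

lemma aux_pi {N : ℕ} (i : Fin N) (μ ν : Fin N → Measure ℝ) [∀ j, IsProbabilityMeasure (μ j)]
    [∀ j, IsProbabilityMeasure (ν j)] (g : ℝ → ℝ≥0∞) (hg : Measurable g)
    (hi : ν i = (μ i).withDensity g) (hj : ∀ j, j ≠ i → ν j = μ j) :
    Measure.pi ν = (Measure.pi μ).withDensity (fun y => g (y i)) := by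
  refine Measure.pi_eq fun s hs => ?_
  rw [withDensity_apply _ (MeasurableSet.univ_pi hs), Measure.restrict_pi_pi,
    ← lintegral_map (μ := Measure.pi fun j => (μ j).restrict (s j)) (g := Function.eval i) hg
      (measurable_pi_apply i),
    Measure.pi_map_eval, lintegral_smul_measure, ← Finset.prod_erase_mul _ _ (Finset.mem_univ i),
    hi, withDensity_apply _ (hs i)]
  congr 1
  refine Finset.prod_congr rfl fun j hj' => ?_
  rw [hj j (Finset.ne_of_mem_erase hj')]
  simp

lemma aux_gauss_s7 (m : ℝ) (v : NNReal) (hv : v ≠ 0) :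
    ProbabilityTheory.gaussianReal 0 v = (ProbabilityTheory.gaussianReal m v).withDensity
      (fun x => ENNReal.ofReal (Real.exp (m ^ 2 / (2 * v) - m / v * x))) := by
  rw [ProbabilityTheory.gaussianReal_of_var_ne_zero _ hv,
    ProbabilityTheory.gaussianReal_of_var_ne_zero _ hv,
    ← withDensity_mul _ (ProbabilityTheory.measurable_gaussianPDF _ _) (by fun_prop)]
  congr 1
  ext x
  have hv' : (v : ℝ) ≠ 0 := by exact_mod_cast hv
  simp only [ProbabilityTheory.gaussianPDF, Pi.mul_apply]
  rw [← ENNReal.ofReal_mul (ProbabilityTheory.gaussianPDFReal_nonneg _ _ _)]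
  congr 1
  simp only [ProbabilityTheory.gaussianPDFReal]
  rw [mul_assoc (√(2 * Real.pi * v))⁻¹, ← Real.exp_add]
  congr 2
  field_simp
  ring

lemma aux_step {N : ℕ} (i : Fin N) (m : ℝ) (v : NNReal) (hv : v ≠ 0) (A : Set (Fin N → ℝ))
    (hA : MeasurableSet A) (t c : ℝ) (P Q : Measure (Fin N → ℝ))
    (hP : P = Measure.pi fun j => ProbabilityTheory.gaussianReal (if j = i then m else 0) v)
    (hQ : Q = Measure.pi fun _ => ProbabilityTheory.gaussianReal 0 v) :
    t * P.real A - m ^ 2 / (2 * v) - c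
      ≤ Real.exp (-c) * (1 + (Real.exp t - 1) * Q.real A) - 1 := by
  have hv' : (v : ℝ) ≠ 0 := by exact_mod_cast hv
  have hPp : IsProbabilityMeasure P := by rw [hP]; infer_instance
  have hQp : IsProbabilityMeasure Q := by rw [hQ]; infer_instance
  set w : ℝ → ℝ := fun x => Real.exp (m ^ 2 / (2 * v) - m / v * x) with hw
  have hwm : Measurable w := by fun_prop
  have hQd : Q = P.withDensity (fun y => ENNReal.ofReal (w (y i))) := by
    rw [hQ, hP]
    refine aux_pi i _ _ (fun x => ENNReal.ofReal (w x)) (by fun_prop) ?_ ?_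
    · simpa using aux_gauss_s7 m v hv
    · intro j hj; simp [hj]
  set φ : (Fin N → ℝ) → ℝ := fun y => 1 + (Real.exp t - 1) * A.indicator 1 y with hφ
  have hind (R : Measure (Fin N → ℝ)) [IsProbabilityMeasure R] :
      Integrable (A.indicator (1 : (Fin N → ℝ) → ℝ)) R :=
    (integrable_const (1 : ℝ)).indicator hA
  have hφQ : Integrable φ Q := (integrable_const _).add ((hind Q).const_mul _)
  have hφQi : ∫ y, φ y ∂Q = 1 + (Real.exp t - 1) * Q.real A := by
    rw [hφ, integral_add (integrable_const _) ((hind Q).const_mul _), integral_const_mul,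
      integral_indicator_one hA]
    simp
  have hgm : Measurable (fun y : Fin N → ℝ => ENNReal.ofReal (w (y i))) := by fun_prop
  have hw0 : ∀ x, 0 ≤ w x := fun x => (Real.exp_pos _).le
  have hI1 : Integrable (fun y => w (y i) * φ y) P := by
    have := hφQ
    rw [hQd, integrable_withDensity_iff_integrable_smul' hgm (by simp)] at this
    simpa [ENNReal.toReal_ofReal, hw0] using this
  have hI2 : ∫ y, w (y i) * φ y ∂P = 1 + (Real.exp t - 1) * Q.real A := by
    rw [← hφQi, hQd, integral_withDensity_eq_integral_toReal_smul hgm (by simp)]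
    simp [ENNReal.toReal_ofReal, hw0]
  have hid : Integrable (fun y : Fin N → ℝ => y i) P := by
    rw [hP]
    exact integrable_eval
      ((ProbabilityTheory.memLp_id_gaussianReal 1).integrable (by simp))
  have hidi : ∫ y, y i ∂P = m := by
    rw [hP, integral_eval]
    simp
  have hL1 : Integrable (fun y => t * A.indicator 1 y +
      ((m ^ 2 / (2 * v) - c) - m / v * y i)) P :=
    ((hind P).const_mul t).add ((integrable_const _).sub (hid.const_mul _))
  have hL2 : ∫ y, (t * A.indicator 1 y + ((m ^ 2 / (2 * v) - c) - m / v * y i)) ∂P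
      = t * P.real A - m ^ 2 / (2 * v) - c := by
    have hX : Integrable (fun y : Fin N → ℝ => (m ^ 2 / (2 * v) - c) - m / v * y i) P :=
      (integrable_const _).sub (hid.const_mul _)
    rw [integral_add ((hind P).const_mul t) hX,
      integral_sub (integrable_const _) (hid.const_mul _), integral_const_mul,
      integral_const_mul, integral_indicator_one hA, hidi]
    simp
    field_simp
    ring
  rw [← hL2, ← hI2]
  have hR : ∫ y, (Real.exp (-c) * (w (y i) * φ y) - 1) ∂P =
      Real.exp (-c) * (∫ y, w (y i) * φ y ∂P) - 1 := by
    rw [integral_sub (hI1.const_mul _) (integrable_const _), integral_const_mul]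
    simp
  rw [← hR]
  refine integral_mono hL1 ((hI1.const_mul _).sub (integrable_const _)) fun y => ?_
  have key : Real.exp (-c) * (w (y i) * φ y) =
      Real.exp (t * A.indicator 1 y + ((m ^ 2 / (2 * v) - c) - m / v * y i)) := by
    have : φ y = Real.exp (t * A.indicator 1 y) := by
      by_cases hy : y ∈ A <;> simp [hφ, hy]
    rw [this, hw, ← Real.exp_add, ← Real.exp_add]
    congr 1
    ring
  have := Real.add_one_le_exp (t * A.indicator 1 y + ((m ^ 2 / (2 * v) - c) - m / v * y i))
  simp only [key]
  linarith

/-- Fano step in the proof of Theorem 2: for the product Gaussian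
measures `P_i` of the worst-case family, any measurable selection rule errs with
probability at least `1/6` under one of the `P_i`. -/
theorem stmt_7
    {N : ℕ} (hN : 4 ≤ N)
    (L ε : ℝ) (hL : 0 < L) (hε : 0 < ε)
    (hεL : ε ≤ L / Real.sqrt (N * Real.log N))
    (hstar : ℝ)
    (hstardef : hstar = ε ^ 2 / L ^ 2 * (5 / 6 * Real.log ((N : ℝ) - 1) - Real.log 2))
    (hstarpos : 0 < hstar) (hstarle : hstar ≤ 1 / N)
    (P : Fin N → Measure (Fin N → ℝ))
    (hP : ∀ i, P i = Measure.pi fun j => ProbabilityTheory.gaussianReal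
      (if j = i then L * hstar else 0) (Real.toNNReal (ε ^ 2 * hstar)))
    (itil : (Fin N → ℝ) → Fin N) (hitil : Measurable itil) :
    1 / 6 ≤ ⨆ i, (P i {y | itil y ≠ i}).toReal := by
  have hN' : (4 : ℝ) ≤ N := by exact_mod_cast hN
  have hN0 : (0 : ℝ) < N := by linarith
  set v : NNReal := Real.toNNReal (ε ^ 2 * hstar) with hvdef
  have hvpos : 0 < ε ^ 2 * hstar := by positivity
  have hvr : (v : ℝ) = ε ^ 2 * hstar := Real.coe_toNNReal _ hvpos.le
  have hv : v ≠ 0 := by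
    intro h
    rw [h] at hvr
    simp at hvr
    rcases hvr with h | h <;> linarith
  set Q : Measure (Fin N → ℝ) :=
    Measure.pi fun _ => ProbabilityTheory.gaussianReal 0 v with hQ
  have hQp : IsProbabilityMeasure Q := by rw [hQ]; infer_instance
  have hPp : ∀ i, IsProbabilityMeasure (P i) := fun i => by rw [hP i]; infer_instance
  set A : Fin N → Set (Fin N → ℝ) := fun i => itil ⁻¹' {i} with hAdef
  have hA : ∀ i, MeasurableSet (A i) := fun i => hitil (measurableSet_singleton i)
  have hQsum : ∑ i, Q.real (A i) = 1 := by
    rw [← measureReal_biUnion_finset]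
    · have : (⋃ i ∈ (Finset.univ : Finset (Fin N)), A i) = Set.univ := by
        ext y; simp [hAdef]
      rw [this]; simp
    · intro a _ b _ hab
      exact Disjoint.preimage _ (by simpa using hab)
    · intro i _; exact hA i
  set S := ⨆ i, (P i {y | itil y ≠ i}).toReal with hS
  have hle : ∀ i, 1 - (P i).real (A i) ≤ S := by
    intro i
    have h1 : (P i {y | itil y ≠ i}).toReal = 1 - (P i).real (A i) := by
      rw [← probReal_compl_eq_one_sub (hA i)]
      rfl
    rw [← h1]
    exact le_ciSup (f := fun i => (P i {y | itil y ≠ i}).toReal)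
      (Set.finite_range _).bddAbove i
  set a := Real.log ((N : ℝ) - 1) with ha
  have hexp : Real.exp a = N - 1 := Real.exp_log (by linarith)
  have hK : (L * hstar) ^ 2 / (2 * (v : ℝ)) = (5 / 6 * a - Real.log 2) / 2 := by
    have h0 := hstarpos.ne'
    have : (L * hstar) ^ 2 / (2 * (v : ℝ)) = L ^ 2 / ε ^ 2 * hstar / 2 := by
      rw [hvr]; field_simp
    rw [this, hstardef]
    field_simp
  have hstep : ∀ i, a * (1 - S) - (5 / 6 * a - Real.log 2) / 2 - Real.log 2
      ≤ (1 / 2) * (1 + ((N : ℝ) - 2) * Q.real (A i)) - 1 := by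
    intro i
    have h := aux_step i (L * hstar) v hv (A i) (hA i) a (Real.log 2) (P i) Q (hP i) hQ
    rw [hK, hexp, Real.exp_neg, Real.exp_log (by norm_num)] at h
    have ha0 : 0 ≤ a := Real.log_nonneg (by linarith)
    have := mul_le_mul_of_nonneg_left (show 1 - S ≤ (P i).real (A i) by linarith [hle i]) ha0
    nlinarith
  have hsum := Finset.sum_le_sum fun i (_ : i ∈ Finset.univ) => hstep i
  simp only [Finset.sum_sub_distrib, ← Finset.mul_sum, Finset.sum_add_distrib, hQsum] at hsum
  simp only [Finset.sum_const, Finset.card_univ, Fintype.card_fin, nsmul_eq_mul] at hsum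
  have hfin : a * (1 - S) - (5 / 6 * a - Real.log 2) / 2 - Real.log 2 ≤ 0 := by
    by_contra hcon
    push Not at hcon
    have := mul_pos hN0 hcon
    nlinarith
  have ha1 : 3 / 2 * Real.log 2 ≤ a := by
    have h3 : Real.log 3 ≤ a := Real.log_le_log (by norm_num) (by linarith)
    have : 3 * Real.log 2 ≤ 2 * Real.log 3 := by
      have h8 : Real.log ((2:ℝ) ^ 3) ≤ Real.log ((3:ℝ) ^ 2) :=
        Real.log_le_log (by norm_num) (by norm_num)
      rw [Real.log_pow, Real.log_pow] at h8
      exact_mod_cast h8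
    linarith
  have hl2 : 0 < Real.log 2 := Real.log_pos (by norm_num)
  by_contra hcon
  push Not at hcon
  nlinarith
end

section
/- For the L²-aggregation procedure described in the context, the selected estimator f̄ = f_ī satisfies the exact oracle inequality E‖f̄ − f‖_2 ≤ min_{i∈I_N} ‖f_i − f‖_2 + 8ε√(2 ln N). -/
open MeasureTheory
open scoped ENNReal

lemma Lnorm_sq {d : ℕ} {g : (Fin d → ℝ) → ℝ} (hg : MemLp g 2 (cubeMeasure d)) :
    Lnorm 2 g ^ 2 = ∫ t, g t ^ 2 ∂(cubeMeasure d) := by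
  have h0 : 0 ≤ ∫ t, g t ^ 2 ∂(cubeMeasure d) := integral_nonneg fun t => sq_nonneg _
  unfold Lnorm
  rw [hg.eLpNorm_eq_integral_rpow_norm (by norm_num) (by norm_num)]
  simp only [ENNReal.toReal_ofNat, Real.rpow_two, Real.norm_eq_abs, sq_abs]
  rw [ENNReal.toReal_ofReal (by positivity), ← Real.rpow_natCast, ← Real.rpow_mul h0]
  norm_num

lemma Lnorm_tri {d : ℕ} {x y z : (Fin d → ℝ) → ℝ} (hx : MemLp x 2 (cubeMeasure d))
    (hy : MemLp y 2 (cubeMeasure d)) (hz : MemLp z 2 (cubeMeasure d)) :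
    Lnorm 2 (fun t => x t - y t) ≤ Lnorm 2 (fun t => x t - z t) + Lnorm 2 (fun t => y t - z t) := by
  have h := eLpNorm_sub_le (p := 2) (hx.sub hz).1 (hy.sub hz).1 (by norm_num)
  have e : (x - z) - (y - z) = fun t => x t - y t := by ext t; simp
  rw [e] at h
  have h2 := ENNReal.toReal_mono
    (ENNReal.add_ne_top.2 ⟨(hx.sub hz).eLpNorm_ne_top, (hy.sub hz).eLpNorm_ne_top⟩) h
  rw [ENNReal.toReal_add (hx.sub hz).eLpNorm_ne_top (hy.sub hz).eLpNorm_ne_top] at h2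
  exact h2

lemma inner_id {d : ℕ} {x y z : (Fin d → ℝ) → ℝ} (hx : MemLp x 2 (cubeMeasure d))
    (hy : MemLp y 2 (cubeMeasure d)) (hz : MemLp z 2 (cubeMeasure d)) (D : ℝ) :
    (∫ t, (x t - y t) / D * ((x t + y t) / 2) ∂(cubeMeasure d)) -
      (∫ t, (x t - y t) / D * z t ∂(cubeMeasure d)) =
    (Lnorm 2 (fun t => x t - z t) ^ 2 - Lnorm 2 (fun t => y t - z t) ^ 2) / (2 * D) := by
  have h1 : Integrable (fun t => (x t - y t) / D * ((x t + y t) / 2)) (cubeMeasure d) := by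
    have := ((hx.sub hy).integrable_mul (hx.add hy)).div_const (D * 2)
    refine this.congr (Filter.Eventually.of_forall fun t => ?_)
    simp only [Pi.mul_apply, Pi.sub_apply, Pi.add_apply]
    ring
  have h2 : Integrable (fun t => (x t - y t) / D * z t) (cubeMeasure d) := by
    have := ((hx.sub hy).integrable_mul hz).div_const D
    refine this.congr (Filter.Eventually.of_forall fun t => ?_)
    simp only [Pi.mul_apply, Pi.sub_apply]
    ring
  have hxz : MemLp (fun t => x t - z t) 2 (cubeMeasure d) := hx.sub hz
  have hyz : MemLp (fun t => y t - z t) 2 (cubeMeasure d) := hy.sub hz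
  rw [Lnorm_sq hxz, Lnorm_sq hyz, ← integral_sub h1 h2,
    ← integral_sub hxz.integrable_sq hyz.integrable_sq, ← integral_div]
  congr 1
  ext t
  by_cases hD : D = 0
  · simp [hD]
  · field_simp
    ring

/-- Theorem 4 of the paper: the exact `L²` oracle inequality
`E‖f̄ − f‖₂ ≤ min_i ‖f_i − f‖₂ + 8ε√(2 ln N)` for the midpoint-based selection rule. -/
theorem stmt_9
    {d N : ℕ} (hd : 1 ≤ d) (hN : 2 ≤ N)
    (f : (Fin d → ℝ) → ℝ) (F : Fin N → (Fin d → ℝ) → ℝ)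
    (hfm : Measurable f) (hFm : ∀ i, Measurable (F i))
    (hf : eLpNorm f 2 (cubeMeasure d) ≠ ⊤)
    (hF : ∀ i, eLpNorm (F i) 2 (cubeMeasure d) ≠ ⊤)
    -- the `f_i` are pairwise distinct (as elements of `L²`)
    (hFdist : ∀ i j, i ≠ j → 0 < Lnorm 2 (fun t => F i t - F j t))
    (ε : ℝ) (hε : 0 < ε)
    -- the normalized probes `ψ_{ij}` and the midpoints `u_{ij}`
    (ψ : Fin N → Fin N → (Fin d → ℝ) → ℝ)
    (hψdef : ∀ i j, i ≠ j → ∀ t, ψ i j t =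
      (F i t - F j t) / Lnorm 2 (fun u => F i u - F j u))
    (u : Fin N → Fin N → (Fin d → ℝ) → ℝ)
    (hudef : ∀ i j t, u i j t = (F i t + F j t) / 2)
    -- the Gaussian noise
    {Ω : Type} [MeasurableSpace Ω] (P : Measure Ω) [IsProbabilityMeasure P]
    (Z : Fin N → Fin N → Ω → ℝ) (hZm : ∀ i j, Measurable (Z i j))
    (hZlaw : ∀ i j, i ≠ j → Measure.map (Z i j) P = ProbabilityTheory.gaussianReal 0 1)
    (hZanti : ∀ i j, i ≠ j → ∀ᵐ ω ∂P, Z j i ω = - Z i j ω)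
    -- the selection rule
    (Mbar : Fin N → Ω → ℝ)
    (hM : ∀ i ω, Mbar i ω = ⨆ j : {j : Fin N // j ≠ i},
      ((∫ t, ψ i j.1 t * u i j.1 t ∂(cubeMeasure d)) -
        ((∫ t, ψ i j.1 t * f t ∂(cubeMeasure d)) + ε * Z i j.1 ω)))
    (ibar : Ω → Fin N) (hibarm : Measurable ibar)
    (hmin : ∀ ω i, Mbar (ibar ω) ω ≤ Mbar i ω) :
    ∫ ω, Lnorm 2 (fun t => F (ibar ω) t - f t) ∂P ≤
      (⨅ i, Lnorm 2 (fun t => F i t - f t)) + 8 * ε * Real.sqrt (2 * Real.log N) := by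
  have hfL : MemLp f 2 (cubeMeasure d) := ⟨hfm.aestronglyMeasurable, lt_top_iff_ne_top.2 hf⟩
  have hFL : ∀ i, MemLp (F i) 2 (cubeMeasure d) := fun i =>
    ⟨(hFm i).aestronglyMeasurable, lt_top_iff_ne_top.2 (hF i)⟩
  have : Nonempty (Fin N) := ⟨⟨0, by omega⟩⟩
  obtain ⟨s, hs⟩ := exists_eq_ciInf_of_finite (f := fun i => Lnorm 2 (fun t => F i t - f t))
  have hsle : ∀ i, Lnorm 2 (fun t => F s t - f t) ≤ Lnorm 2 (fun t => F i t - f t) := by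
    intro i
    have := ciInf_le (Finite.bddBelow_range fun i => Lnorm 2 (fun t => F i t - f t)) i
    rw [hs]
    exact this
  rw [← hs]
  set a : Fin N → ℝ := fun i => Lnorm 2 (fun t => F i t - f t) with ha
  have ha0 : ∀ i, 0 ≤ a i := fun i => ENNReal.toReal_nonneg
  change ∀ i, a s ≤ a i at hsle
  change ∫ ω, a (ibar ω) ∂P ≤ a s + _
  -- the deterministic part
  set m : Fin N → Fin N → ℝ := fun i j =>
    (a i ^ 2 - a j ^ 2) / (2 * Lnorm 2 (fun t => F i t - F j t)) with hm
  have hM2 : ∀ i ω, Mbar i ω = ⨆ j : {j : Fin N // j ≠ i}, (m i j.1 - ε * Z i j.1 ω) := by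
    intro i ω
    rw [hM]
    congr 1
    ext j
    rw [← sub_sub]
    congr 1
    rw [hm, ha]
    simp only
    rw [← inner_id (hFL i) (hFL j.1) hfL]
    simp only [hψdef i j.1 j.2.symm, hudef]
  have hanti : ∀ᵐ ω ∂P, ∀ i j, i ≠ j → Z j i ω = - Z i j ω := by
    rw [ae_all_iff]; intro i
    rw [ae_all_iff]; intro j
    by_cases h : i = j
    · simp [h]
    · filter_upwards [hZanti i j h] with ω hω _ using hω
  have hdet : ∀ᵐ ω ∂P, a (ibar ω) ≤ a s ∨
      ∃ j, j ≠ s ∧ a (ibar ω) ≤ a s + 4 * ε * Z j s ω := by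
    filter_upwards [hanti] with ω hω
    by_cases hi : ibar ω = s
    · left; rw [hi]
    right
    have : Nonempty {j : Fin N // j ≠ s} := ⟨⟨ibar ω, hi⟩⟩
    obtain ⟨j₁, hj₁⟩ := exists_eq_ciSup_of_finite
      (f := fun j : {j : Fin N // j ≠ s} => (m s j.1 - ε * Z s j.1 ω))
    obtain ⟨j, -, hj⟩ := Finset.exists_max_image (Finset.univ : Finset {j : Fin N // j ≠ s})
      (fun j => Z j.1 s ω) Finset.univ_nonempty
    refine ⟨j.1, j.2, ?_⟩
    have hk1 : m (ibar ω) s - ε * Z (ibar ω) s ω ≤ Mbar (ibar ω) ω := by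
      rw [hM2]
      exact le_ciSup (f := fun j : {j : Fin N // j ≠ ibar ω} =>
        (m (ibar ω) j.1 - ε * Z (ibar ω) j.1 ω)) (Finite.bddAbove_range _) ⟨s, Ne.symm hi⟩
    have hk2 := hmin ω s
    rw [hM2 s, ← hj₁] at hk2
    have hk3 : m s j₁.1 ≤ 0 := by
      refine div_nonpos_of_nonpos_of_nonneg ?_ (mul_nonneg zero_le_two ENNReal.toReal_nonneg)
      have := hsle j₁.1
      nlinarith [ha0 s]
    have hk4 := hω j₁.1 s j₁.2
    have hk5 := hj j₁ (Finset.mem_univ _)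
    have hk6 := hj ⟨ibar ω, hi⟩ (Finset.mem_univ _)
    simp only at hk5 hk6 hk2
    have hk7 : m (ibar ω) s ≤ 2 * (ε * Z j.1 s ω) := by
      have e1 := mul_le_mul_of_nonneg_left hk5 hε.le
      have e2 := mul_le_mul_of_nonneg_left hk6 hε.le
      rw [hk4] at hk2
      linarith
    have hk8 : (a (ibar ω) - a s) / 2 ≤ m (ibar ω) s := by
      have hD := hFdist (ibar ω) s hi
      have hT : Lnorm 2 (fun t => F (ibar ω) t - F s t) ≤ a (ibar ω) + a s :=
        Lnorm_tri (hFL _) (hFL _) hfL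
      simp only [hm]
      rw [le_div_iff₀ (by positivity)]
      nlinarith [mul_le_mul_of_nonneg_left hT (sub_nonneg.2 (hsle (ibar ω)))]
    linarith
  -- the stochastic part
  have hN' : (2 : ℝ) ≤ N := by exact_mod_cast hN
  have hlog : 0 < Real.log N := Real.log_pos (by linarith)
  set l : ℝ := Real.sqrt (2 * Real.log N) with hl
  have hl0 : 0 < l := Real.sqrt_pos.2 (by positivity)
  have hl2 : l ^ 2 = 2 * Real.log N := Real.sq_sqrt (by positivity)
  set K : ℝ := N * Real.exp (l ^ 2 / 2) with hK
  have hK0 : 0 < K := by positivity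
  have hKlog : Real.log K = l ^ 2 := by
    rw [hK, Real.log_mul (by positivity) (by positivity), Real.log_exp]; linarith
  have key : ∀ x : ℝ, x ≤ l ^ 2 - 1 + Real.exp x / K := by
    intro x
    have h1 := Real.add_one_le_exp (x - Real.log K)
    rw [Real.exp_sub, Real.exp_log hK0, hKlog] at h1
    linarith
  set G : Ω → ℝ := fun ω => a s + 4 * ε / l * (l ^ 2 - 1 +
    (1 + ∑ j ∈ Finset.univ.erase s, Real.exp (l * Z j s ω)) / K) with hG
  have hle : ∀ᵐ ω ∂P, a (ibar ω) ≤ G ω := by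
    filter_upwards [hdet] with ω hω
    have hc : 0 ≤ 4 * ε / l := by positivity
    have hsum : 0 ≤ ∑ j ∈ Finset.univ.erase s, Real.exp (l * Z j s ω) :=
      Finset.sum_nonneg fun _ _ => (Real.exp_pos _).le
    rcases hω with h | ⟨j, hj, h⟩
    · refine h.trans (le_add_of_nonneg_right (mul_nonneg hc ?_))
      refine (key 0).trans ?_
      rw [Real.exp_zero]
      gcongr
      linarith
    · refine h.trans ?_
      have h1 : l * Z j s ω ≤ l ^ 2 - 1 +
          (1 + ∑ j ∈ Finset.univ.erase s, Real.exp (l * Z j s ω)) / K := by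
        refine (key _).trans ?_
        gcongr
        have := Finset.single_le_sum (f := fun j => Real.exp (l * Z j s ω))
          (fun i _ => (Real.exp_pos _).le) (Finset.mem_erase.2 ⟨hj, Finset.mem_univ j⟩)
        linarith
      have h2 := mul_le_mul_of_nonneg_left h1 hc
      have h3 : 4 * ε / l * (l * Z j s ω) = 4 * ε * Z j s ω := by field_simp
      rw [h3] at h2
      simp only [hG]
      linarith
  have hint : ∀ j ∈ Finset.univ.erase s, Integrable (fun ω => Real.exp (l * Z j s ω)) P := by
    intro j hj
    have h := ProbabilityTheory.integrable_exp_mul_gaussianReal (μ := 0) (v := 1) l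
    rw [← hZlaw j s (Finset.ne_of_mem_erase hj)] at h
    exact h.comp_measurable (hZm j s)
  have hval : ∀ j ∈ Finset.univ.erase s, ∫ ω, Real.exp (l * Z j s ω) ∂P
      = Real.exp (l ^ 2 / 2) := by
    intro j hj
    have h := ProbabilityTheory.mgf_gaussianReal (hZlaw j s (Finset.ne_of_mem_erase hj)) l
    simpa [ProbabilityTheory.mgf] using h
  have hS := integrable_finsetSum _ hint
  have hS1 : Integrable (fun ω => (1 + ∑ j ∈ Finset.univ.erase s, Real.exp (l * Z j s ω)) / K) P :=
    ((integrable_const _).add hS).div_const K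
  have hS2 : Integrable (fun ω => 4 * ε / l * (l ^ 2 - 1 +
      (1 + ∑ j ∈ Finset.univ.erase s, Real.exp (l * Z j s ω)) / K)) P :=
    ((integrable_const _).add hS1).const_mul _
  have hGint : Integrable G P := (integrable_const _).add hS2
  have hGval : ∫ ω, G ω ∂P = a s + 4 * ε / l * (l ^ 2 - 1 +
      (1 + (N - 1) * Real.exp (l ^ 2 / 2)) / K) := by
    simp only [hG]
    rw [integral_add (integrable_const _) hS2, integral_const_mul,
      integral_add (integrable_const _) hS1, integral_div,
      integral_add (integrable_const _) hS, integral_finsetSum _ hint, Finset.sum_congr rfl hval]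
    simp [Nat.cast_sub (show 1 ≤ N by omega)]
  refine (integral_mono_of_nonneg (Filter.Eventually.of_forall fun ω => ha0 _) hGint hle).trans ?_
  rw [hGval]
  have hq : (1 + (N - 1) * Real.exp (l ^ 2 / 2)) / K ≤ 1 := by
    rw [div_le_one hK0, hK]
    have := Real.one_le_exp (show 0 ≤ l ^ 2 / 2 by positivity)
    linarith
  have h1 : 4 * ε / l * (l ^ 2 - 1 + (1 + (N - 1) * Real.exp (l ^ 2 / 2)) / K)
      ≤ 4 * ε / l * l ^ 2 := by
    gcongr
    linarith
  have h2 : 4 * ε / l * l ^ 2 = 4 * ε * l := by field_simp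
  have h3 : 0 < ε * l := by positivity
  linarith
end

section
/- In the deterministic L²-selection setting of the context, if ī minimizes M̄_i over i ∈ I_N and i* minimizes ‖f_i − f‖_2 over i ∈ I_N, then ‖f_ī − f‖_2 ≤ ‖f_{i*} − f‖_2 + 4ε·max_{j∈I_N, j≠i*} |z_{i*j}|. -/
open MeasureTheory
open scoped ENNReal

theorem aux_sq {d : ℕ} {g : (Fin d → ℝ) → ℝ} (hg : MemLp g 2 (cubeMeasure d)) :
    Lnorm 2 g ^ 2 = ∫ t, g t * g t ∂(cubeMeasure d) := by
  have h1 : Lnorm 2 g = ‖hg.toLp g‖ := by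
    rw [Lp.norm_toLp]; rfl
  rw [h1, ← real_inner_self_eq_norm_sq, L2.inner_def]
  apply integral_congr_ae
  filter_upwards [hg.coeFn_toLp] with t ht
  simp [ht, sq]

theorem aux_tri {d : ℕ} {g h k : (Fin d → ℝ) → ℝ} (hg : MemLp g 2 (cubeMeasure d))
    (hh : MemLp h 2 (cubeMeasure d)) (hk : MemLp k 2 (cubeMeasure d)) :
    Lnorm 2 (fun t => g t - h t) ≤ Lnorm 2 (fun t => g t - k t) + Lnorm 2 (fun t => h t - k t) := by
  have key : ∀ {a b : (Fin d → ℝ) → ℝ} (ha : MemLp a 2 (cubeMeasure d))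
    (hb : MemLp b 2 (cubeMeasure d)), Lnorm 2 (fun t => a t - b t) = ‖ha.toLp a - hb.toLp b‖ := by
    intro a b ha hb
    rw [← MemLp.toLp_sub, Lp.norm_toLp]; rfl
  rw [key hg hh, key hg hk, key hh hk, norm_sub_rev (hh.toLp h)]
  exact norm_sub_le_norm_sub_add_norm_sub _ _ _

/-- deterministic step in the proof of Theorem 4: if `ī` minimizes
`M̄_i` and `i*` minimizes `‖f_i − f‖₂`, then
`‖f_ī − f‖₂ ≤ ‖f_{i*} − f‖₂ + 4ε·max_{j ≠ i*} |z_{i*j}|`. -/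
theorem stmt_10
    {d N : ℕ} (hd : 1 ≤ d) (hN : 2 ≤ N)
    (f : (Fin d → ℝ) → ℝ) (F : Fin N → (Fin d → ℝ) → ℝ)
    (hfm : Measurable f) (hFm : ∀ i, Measurable (F i))
    (hf : eLpNorm f 2 (cubeMeasure d) ≠ ⊤)
    (hF : ∀ i, eLpNorm (F i) 2 (cubeMeasure d) ≠ ⊤)
    (hFdist : ∀ i j, i ≠ j → 0 < Lnorm 2 (fun t => F i t - F j t))
    (ε : ℝ) (hε : 0 < ε)
    (ψ : Fin N → Fin N → (Fin d → ℝ) → ℝ)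
    (hψdef : ∀ i j, i ≠ j → ∀ t, ψ i j t =
      (F i t - F j t) / Lnorm 2 (fun u => F i u - F j u))
    (u : Fin N → Fin N → (Fin d → ℝ) → ℝ)
    (hudef : ∀ i j t, u i j t = (F i t + F j t) / 2)
    (z : Fin N → Fin N → ℝ) (hzanti : ∀ i j, i ≠ j → z j i = - z i j)
    (Mbar : Fin N → ℝ)
    (hM : ∀ i, Mbar i = ⨆ j : {j : Fin N // j ≠ i},
      ((∫ t, ψ i j.1 t * u i j.1 t ∂(cubeMeasure d)) -
        ((∫ t, ψ i j.1 t * f t ∂(cubeMeasure d)) + ε * z i j.1)))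
    (ibar : Fin N) (hmin : ∀ i, Mbar ibar ≤ Mbar i)
    (istar : Fin N)
    (histar : ∀ i, Lnorm 2 (fun t => F istar t - f t) ≤ Lnorm 2 (fun t => F i t - f t)) :
    Lnorm 2 (fun t => F ibar t - f t) ≤
      Lnorm 2 (fun t => F istar t - f t) +
        4 * ε * ⨆ j : {j : Fin N // j ≠ istar}, |z istar j.1| := by
  have mf : MemLp f 2 (cubeMeasure d) := ⟨hfm.aestronglyMeasurable, lt_top_iff_ne_top.2 hf⟩
  have mF : ∀ i, MemLp (F i) 2 (cubeMeasure d) :=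
    fun i => ⟨(hFm i).aestronglyMeasurable, lt_top_iff_ne_top.2 (hF i)⟩
  set Z := ⨆ j : {j : Fin N // j ≠ istar}, |z istar j.1| with hZ
  have Z0 : 0 ≤ Z := Real.iSup_nonneg fun _ => abs_nonneg _
  by_cases hne : ibar = istar
  · subst hne
    have : 0 ≤ 4 * ε * Z := by positivity
    linarith
  have hT : ∀ i j, i ≠ j → (∫ t, ψ i j t * u i j t ∂(cubeMeasure d)) -
        ∫ t, ψ i j t * f t ∂(cubeMeasure d) =
      (Lnorm 2 (fun t => F i t - f t) ^ 2 - Lnorm 2 (fun t => F j t - f t) ^ 2) /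
        (2 * Lnorm 2 (fun t => F i t - F j t)) := by
    intro i j hij
    have mi : MemLp (fun t => F i t - f t) 2 (cubeMeasure d) := (mF i).sub mf
    have mj : MemLp (fun t => F j t - f t) 2 (cubeMeasure d) := (mF j).sub mf
    have mψ : MemLp (ψ i j) 2 (cubeMeasure d) := by
      have h := ((mF i).sub (mF j)).const_mul (Lnorm 2 (fun t => F i t - F j t))⁻¹
      convert h using 1
      funext t
      rw [hψdef i j hij t, div_eq_inv_mul]; rfl
    have mu : MemLp (u i j) 2 (cubeMeasure d) := by
      have h := ((mF i).add (mF j)).const_mul (2 : ℝ)⁻¹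
      convert h using 1
      funext t
      rw [hudef i j t, div_eq_inv_mul]; rfl
    have hD := hFdist i j hij
    have pi : ∀ {a b : (Fin d → ℝ) → ℝ}, MemLp a 2 (cubeMeasure d) → MemLp b 2 (cubeMeasure d) →
        Integrable (fun t => a t * b t) (cubeMeasure d) := fun ha hb => ha.integrable_mul hb
    rw [aux_sq mi, aux_sq mj, ← integral_sub (pi mψ mu) (pi mψ mf),
      ← integral_sub (pi mi mi) (pi mj mj), ← integral_div]
    congr 1
    funext t
    rw [hψdef i j hij t, hudef]
    field_simp
    ring
  have hzle : ∀ j, j ≠ istar → |z istar j| ≤ Z := fun j hj =>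
    le_ciSup (f := fun j : {j : Fin N // j ≠ istar} => |z istar j.1|)
      (Set.finite_range _).bddAbove ⟨j, hj⟩
  have n0 : ∀ g : (Fin d → ℝ) → ℝ, 0 ≤ Lnorm 2 g := fun g => ENNReal.toReal_nonneg
  have hMs : Mbar istar ≤ ε * Z := by
    rw [hM]
    haveI : Nonempty {j : Fin N // j ≠ istar} := ⟨⟨ibar, hne⟩⟩
    apply ciSup_le
    rintro ⟨j, hj⟩
    have h1 := hT istar j hj.symm
    have h2 : (Lnorm 2 (fun t => F istar t - f t) ^ 2 - Lnorm 2 (fun t => F j t - f t) ^ 2) /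
        (2 * Lnorm 2 (fun t => F istar t - F j t)) ≤ 0 := by
      apply div_nonpos_of_nonpos_of_nonneg
      · have := pow_le_pow_left₀ (n0 _) (histar j) 2
        linarith
      · have := n0 (fun t => F istar t - F j t)
        linarith
    have h3 := mul_le_mul_of_nonneg_left ((neg_le_abs _).trans (hzle j hj)) hε.le
    simp only
    linarith
  have hMi := le_ciSup (f := fun j : {j : Fin N // j ≠ ibar} =>
      ((∫ t, ψ ibar j.1 t * u ibar j.1 t ∂(cubeMeasure d)) -
        ((∫ t, ψ ibar j.1 t * f t ∂(cubeMeasure d)) + ε * z ibar j.1)))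
      (Set.finite_range _).bddAbove ⟨istar, Ne.symm hne⟩
  rw [← hM ibar] at hMi
  simp only at hMi
  have h1 := hT ibar istar hne
  have h2 := hmin istar
  have h3 := mul_le_mul_of_nonneg_left ((neg_le_abs _).trans (hzle ibar hne)) hε.le
  rw [← hzanti istar ibar (Ne.symm hne)] at h3
  have hD := hFdist ibar istar hne
  have htri := aux_tri (mF ibar) (mF istar) mf
  set a := Lnorm 2 (fun t => F ibar t - f t)
  set b := Lnorm 2 (fun t => F istar t - f t)
  set D := Lnorm 2 (fun t => F ibar t - F istar t)
  have h4 : (a ^ 2 - b ^ 2) / (2 * D) ≤ 2 * (ε * Z) := by linarith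
  rw [div_le_iff₀ (by positivity)] at h4
  have h5 : 0 ≤ ε * Z := by positivity
  have h6 := mul_le_mul_of_nonneg_left htri h5
  have h7 : (a - b) * (a + b) ≤ (4 * ε * Z) * (a + b) := by nlinarith
  have h8 := le_of_mul_le_mul_right h7 (by linarith)
  linarith
end

section
/- For the normal-means aggregation procedure described in the context, if Ψ is a (γ,p)-good set of probe vectors, then the selected estimator μ̂ = μ_î satisfies E|μ̂ − μ|_p ≤ (2·max_{ψ∈Ψ*} |ψ|_q + 1)·min_{i∈I_N} |μ_i − μ|_p + 2κε·max_{ψ∈Ψ*} |ψ|_Σ + γ + 2Lδ. -/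
open MeasureTheory Matrix
open scoped ENNReal

/-- The `ℓ_r` norm of a vector in `ℝ^n`, for `r ∈ [1,∞]`. -/
noncomputable def lnorm {n : ℕ} (r : ℝ≥0∞) (v : Fin n → ℝ) : ℝ :=
  if r = ⊤ then ⨆ k, |v k| else (∑ k, |v k| ^ r.toReal) ^ (1 / r.toReal)

/-- The seminorm `|ψ|_Σ = √(ψᵀ Σ ψ)` induced by a positive semidefinite matrix `Σ`. -/
noncomputable def signorm {n : ℕ} (Sig : Matrix (Fin n) (Fin n) ℝ) (v : Fin n → ℝ) : ℝ :=
  Real.sqrt (v ⬝ᵥ Sig.mulVec v)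

lemma lnorm_eq_norm {n : ℕ} (r : ℝ≥0∞) [Fact (1 ≤ r)] (v : Fin n → ℝ) :
    lnorm r v = ‖WithLp.toLp r v‖ := by
  unfold lnorm
  split_ifs with h
  · subst h
    rw [PiLp.norm_eq_ciSup]; simp
  · have h1 : (1:ℝ≥0∞) ≤ r := Fact.out
    rw [PiLp.norm_eq_sum (ENNReal.toReal_pos (by positivity) h)]
    simp

lemma lnorm_tri {n : ℕ} (r : ℝ≥0∞) (hr : 1 ≤ r) (a b : Fin n → ℝ) :
    lnorm r (a + b) ≤ lnorm r a + lnorm r b := by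
  haveI : Fact (1 ≤ r) := ⟨hr⟩
  simp only [lnorm_eq_norm, WithLp.toLp_add]
  exact norm_add_le _ _

lemma lnorm_neg' {n : ℕ} (r : ℝ≥0∞) (a : Fin n → ℝ) :
    lnorm r (-a) = lnorm r a := by
  simp [lnorm]

lemma lnorm_nonneg {n : ℕ} (r : ℝ≥0∞) (hr : 1 ≤ r) (a : Fin n → ℝ) : 0 ≤ lnorm r a := by
  haveI : Fact (1 ≤ r) := ⟨hr⟩
  rw [lnorm_eq_norm]; exact norm_nonneg _

lemma lnorm_pos {n : ℕ} (r : ℝ≥0∞) (hr : 1 ≤ r) (a : Fin n → ℝ) (ha : a ≠ 0) :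
    0 < lnorm r a := by
  haveI : Fact (1 ≤ r) := ⟨hr⟩
  rw [lnorm_eq_norm, norm_pos_iff]; simpa using ha

lemma holder_top {n : ℕ} (a b : Fin n → ℝ) : |a ⬝ᵥ b| ≤ lnorm 1 a * lnorm ⊤ b := by
  have h1 : lnorm 1 a = ∑ k, |a k| := by simp [lnorm]
  have h2 : lnorm ⊤ b = ⨆ k, |b k| := by simp [lnorm]
  rw [h1, h2, dotProduct, Finset.sum_mul]
  refine (Finset.abs_sum_le_sum_abs _ _).trans (Finset.sum_le_sum fun i _ => ?_)
  rw [abs_mul]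
  exact mul_le_mul_of_nonneg_left (le_ciSup (f := fun k => |b k|) (Set.finite_range _).bddAbove i)
    (abs_nonneg _)

lemma holder {n : ℕ} (p q : ℝ≥0∞) (hp : 1 ≤ p) (hpq : 1 / p + 1 / q = 1) (a b : Fin n → ℝ) :
    |a ⬝ᵥ b| ≤ lnorm q a * lnorm p b := by
  simp only [one_div] at hpq
  by_cases hpt : p = ⊤
  · subst hpt
    have : q = 1 := by simpa using hpq
    subst this; exact holder_top a b
  by_cases hqt : q = ⊤
  · subst hqt
    have : p = 1 := by simpa using hpq
    subst this; rw [dotProduct_comm, mul_comm]; exact holder_top b a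
  haveI : ENNReal.HolderConjugate q p := ⟨by rw [add_comm, hpq]; simp⟩
  have hp0 : p ≠ 0 := by positivity
  have hq0 : q ≠ 0 := by rintro rfl; simp at hpq
  have hq1 : q ≠ 1 := by
    rintro rfl
    have : p⁻¹ = 0 := by
      have h2 : p⁻¹ + 1 = 0 + 1 := by simpa using hpq
      exact (ENNReal.add_left_inj (by simp)).1 h2
    simp at this; exact hpt this
  have hr : p.toReal⁻¹ + q.toReal⁻¹ = 1 := by
    rw [← ENNReal.toReal_inv, ← ENNReal.toReal_inv, ← ENNReal.toReal_add (by simpa) (by simpa), hpq]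
    simp
  have hc : q.toReal.HolderConjugate p.toReal := by
    refine ⟨by rw [add_comm, hr]; simp, ENNReal.toReal_pos hq0 hqt, ENNReal.toReal_pos hp0 hpt⟩
  have := Real.inner_le_Lp_mul_Lq Finset.univ (fun k => |a k|) (fun k => |b k|) hc
  simp only [abs_abs] at this
  simp only [lnorm, hpt, hqt, if_false]
  refine le_trans ?_ this
  rw [dotProduct]
  refine (Finset.abs_sum_le_sum_abs _ _).trans (le_of_eq ?_)
  simp [abs_mul]

/-- Theorem 6 of the paper: oracle inequality for the normal-means
aggregation procedure with a `(γ,p)`-good set of probe vectors. -/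
theorem stmt_14
    {n N : ℕ} (hn : 1 ≤ n) (hN : 2 ≤ N)
    (p q : ℝ≥0∞) (hp : 1 ≤ p) (hpq : 1 / p + 1 / q = 1)
    (γ : ℝ) (hγ : 0 ≤ γ)
    (mu : Fin n → ℝ) (Mu : Fin N → Fin n → ℝ)
    (hdist : ∀ i j, i ≠ j → Mu i ≠ Mu j)
    (L : ℝ) (hL : L = max (lnorm p mu) (⨆ i, lnorm p (Mu i)))
    (Sig : Matrix (Fin n) (Fin n) ℝ) (hSig : Sig.PosSemidef)
    -- the finite `(γ,p)`-good set of probe vectors `Ψ`, indexed by `K`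
    {K : Type} [Fintype K] [Nonempty K]
    (ψ : K → Fin n → ℝ) (hψ0 : ∀ k, ψ k ≠ 0)
    (hψSig : ∀ k, 0 < signorm Sig (ψ k))
    (rep : Fin N → Fin N → K)
    (hgood : ∀ i j, i ≠ j →
      |ψ (rep i j) ⬝ᵥ (Mu i - Mu j) - lnorm p (Mu i - Mu j)| ≤ γ)
    -- the aggregation procedure, based on the observation `Y = μ + εw`
    {Ω : Type} [MeasurableSpace Ω] (P : Measure Ω) [IsProbabilityMeasure P]
    (w : Ω → Fin n → ℝ) (hw : Measurable w)
    (ε δ : ℝ) (hε : 0 < ε) (hδ0 : 0 < δ) (hδ1 : δ < 1)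
    (κ : ℝ) (hκpos : 0 < κ)
    (hκ : (P {ω | κ ≤ ⨆ k, |ψ k ⬝ᵥ w ω| / signorm Sig (ψ k)}).toReal ≤ δ)
    (Mhat : Fin N → Ω → ℝ)
    (hM : ∀ i ω, Mhat i ω = ⨆ k,
      (|ψ k ⬝ᵥ (mu + ε • w ω - Mu i)| - κ * ε * signorm Sig (ψ k)) / lnorm q (ψ k))
    (ihat : Ω → Fin N) (hihatm : Measurable ihat)
    (hmin : ∀ ω i, Mhat (ihat ω) ω ≤ Mhat i ω)
    (istar : Fin N)
    (histar : ∀ i, lnorm p (Mu istar - mu) ≤ lnorm p (Mu i - mu)) :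
    ∫ ω, lnorm p (Mu (ihat ω) - mu) ∂P ≤
      (2 * (⨆ j : {j : Fin N // j ≠ istar}, lnorm q (ψ (rep istar j.1))) + 1) *
          (⨅ i, lnorm p (Mu i - mu))
        + 2 * κ * ε * (⨆ j : {j : Fin N // j ≠ istar}, signorm Sig (ψ (rep istar j.1)))
        + γ + 2 * L * δ := by
  have hq : 1 ≤ q := by
    have : q⁻¹ ≤ 1 := by rw [← hpq]; simp
    simpa using this
  haveI : NeZero N := ⟨by omega⟩
  haveI : Nonempty (Fin N) := ⟨istar⟩
  set R := lnorm p (Mu istar - mu) with hR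
  have hR0 : 0 ≤ R := lnorm_nonneg p hp _
  have hinf : (⨅ i, lnorm p (Mu i - mu)) = R :=
    le_antisymm (ciInf_le (Set.finite_range _).bddBelow istar) (le_ciInf histar)
  rw [hinf]
  set Q := ⨆ j : {j : Fin N // j ≠ istar}, lnorm q (ψ (rep istar j.1)) with hQ
  set S := ⨆ j : {j : Fin N // j ≠ istar}, signorm Sig (ψ (rep istar j.1)) with hS
  have hQ0 : 0 ≤ Q := Real.iSup_nonneg fun j => lnorm_nonneg q hq _
  have hS0 : 0 ≤ S := Real.iSup_nonneg fun j => (hψSig _).le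
  have hmuL : lnorm p mu ≤ L := hL ▸ le_max_left _ _
  have hMuL : ∀ i, lnorm p (Mu i) ≤ L := fun i =>
    (le_ciSup (f := fun i => lnorm p (Mu i)) (Set.finite_range _).bddAbove i).trans
      (hL ▸ le_max_right _ _)
  have hL0 : 0 ≤ L := (lnorm_nonneg p hp mu).trans hmuL
  have hf2L : ∀ i, lnorm p (Mu i - mu) ≤ 2 * L := by
    intro i
    have := lnorm_tri p hp (Mu i) (-mu)
    rw [lnorm_neg', ← sub_eq_add_neg] at this
    linarith [hMuL i]
  set B := (2 * Q + 1) * R + 2 * κ * ε * S + γ with hB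
  have hB0 : 0 ≤ B := by positivity
  set bad := {ω | κ ≤ ⨆ k, |ψ k ⬝ᵥ w ω| / signorm Sig (ψ k)} with hbad
  have hbm : MeasurableSet bad := by
    refine measurableSet_le measurable_const (Measurable.iSup fun k => ?_)
    refine Measurable.div_const ?_ _
    refine measurable_norm.comp (?_ : Measurable fun ω => ψ k ⬝ᵥ w ω)
    simp only [dotProduct]
    fun_prop
  have hgoodB : ∀ ω, ω ∉ bad → lnorm p (Mu (ihat ω) - mu) ≤ B := by
    intro ω hω
    by_cases hi : ihat ω = istar
    · rw [hi, ← hR, hB]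
      have : 0 ≤ 2 * Q * R + 2 * κ * ε * S := by positivity
      linarith
    have hlt : ∀ k, |ψ k ⬝ᵥ w ω| ≤ κ * signorm Sig (ψ k) := by
      intro k
      have h1 : (⨆ k, |ψ k ⬝ᵥ w ω| / signorm Sig (ψ k)) < κ := by simpa [hbad] using hω
      have h2 := (le_ciSup (f := fun k => |ψ k ⬝ᵥ w ω| / signorm Sig (ψ k))
        (Set.finite_range _).bddAbove k).trans h1.le
      exact (div_le_iff₀ (hψSig k)).1 h2
    have hD : ∀ k, |ψ k ⬝ᵥ (mu + ε • w ω - Mu istar)| ≤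
        R * lnorm q (ψ k) + κ * ε * signorm Sig (ψ k) := by
      intro k
      have e : ψ k ⬝ᵥ (mu + ε • w ω - Mu istar)
          = -(ψ k ⬝ᵥ (Mu istar - mu)) + ε * (ψ k ⬝ᵥ w ω) := by
        simp only [dotProduct_sub, dotProduct_add, dotProduct_smul, smul_eq_mul]; ring
      rw [e]
      refine (abs_add_le _ _).trans ?_
      rw [abs_neg, abs_mul, abs_of_pos hε]
      have h1 := holder p q hp hpq (ψ k) (Mu istar - mu)
      have h2 := mul_le_mul_of_nonneg_left (hlt k) hε.le
      rw [← hR] at h1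
      linarith
    have hMs : Mhat istar ω ≤ R := by
      rw [hM]
      refine ciSup_le fun k => ?_
      rw [div_le_iff₀ (lnorm_pos q hq _ (hψ0 k))]
      linarith [hD k]
    have hMh : Mhat (ihat ω) ω ≤ R := (hmin ω istar).trans hMs
    set k := rep istar (ihat ω) with hk
    have hD2 : |ψ k ⬝ᵥ (mu + ε • w ω - Mu (ihat ω))| ≤
        R * lnorm q (ψ k) + κ * ε * signorm Sig (ψ k) := by
      rw [hM] at hMh
      have h2 := (le_ciSup (f := fun k => (|ψ k ⬝ᵥ (mu + ε • w ω - Mu (ihat ω))|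
        - κ * ε * signorm Sig (ψ k)) / lnorm q (ψ k)) (Set.finite_range _).bddAbove k).trans hMh
      have := (div_le_iff₀ (lnorm_pos q hq _ (hψ0 k))).1 h2
      linarith
    have hkQ : lnorm q (ψ k) ≤ Q :=
      le_ciSup (f := fun j : {j : Fin N // j ≠ istar} => lnorm q (ψ (rep istar j.1)))
        (Set.finite_range _).bddAbove ⟨ihat ω, hi⟩
    have hkS : signorm Sig (ψ k) ≤ S :=
      le_ciSup (f := fun j : {j : Fin N // j ≠ istar} => signorm Sig (ψ (rep istar j.1)))
        (Set.finite_range _).bddAbove ⟨ihat ω, hi⟩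
    have hg := (abs_le.1 (hgood istar (ihat ω) (Ne.symm hi))).1
    rw [← hk] at hg
    have e : ψ k ⬝ᵥ (Mu istar - Mu (ihat ω)) = ψ k ⬝ᵥ (mu + ε • w ω - Mu (ihat ω))
        - ψ k ⬝ᵥ (mu + ε • w ω - Mu istar) := by
      rw [← dotProduct_sub]; congr 1; abel
    have h1 := (abs_le.1 hD2).2
    have h2 := (abs_le.1 (hD k)).1
    have ht := lnorm_tri p hp (-(Mu istar - Mu (ihat ω))) (Mu istar - mu)
    rw [lnorm_neg', ← hR, show -(Mu istar - Mu (ihat ω)) + (Mu istar - mu) = Mu (ihat ω) - mu by abel]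
      at ht
    have h3 := mul_le_mul_of_nonneg_left hkQ hR0
    have h4 := mul_le_mul_of_nonneg_left hkS (mul_pos hκpos hε).le
    rw [hB]
    linarith
  have hpt : ∀ ω, lnorm p (Mu (ihat ω) - mu) ≤ B + bad.indicator (fun _ => 2 * L) ω := by
    intro ω
    by_cases hω : ω ∈ bad
    · rw [Set.indicator_of_mem hω]; linarith [hf2L (ihat ω)]
    · rw [Set.indicator_of_notMem hω]; linarith [hgoodB ω hω]
  have hfm : Measurable fun ω => lnorm p (Mu (ihat ω) - mu) :=
    (measurable_of_finite (fun i => lnorm p (Mu i - mu))).comp hihatm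
  have hfi : Integrable (fun ω => lnorm p (Mu (ihat ω) - mu)) P := by
    refine Integrable.of_bound hfm.aestronglyMeasurable (2 * L) (Filter.Eventually.of_forall fun ω => ?_)
    rw [Real.norm_of_nonneg (lnorm_nonneg p hp _)]
    exact hf2L _
  have hii : Integrable (bad.indicator (fun _ => 2 * L)) P :=
    (integrable_const _).indicator hbm
  calc ∫ ω, lnorm p (Mu (ihat ω) - mu) ∂P
      ≤ ∫ ω, (B + bad.indicator (fun _ => 2 * L) ω) ∂P :=
        integral_mono hfi ((integrable_const _).add hii) hpt
    _ = B + (P bad).toReal * (2 * L) := by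
        rw [integral_add (integrable_const _) hii, integral_indicator_const _ hbm]
        simp [Measure.real]
    _ ≤ B + 2 * L * δ := by
        have := mul_le_mul_of_nonneg_right hκ (by positivity : 0 ≤ 2 * L)
        linarith
end
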